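/- The Lorentzian length is upper semicontinuous: if γ_j is a sequence of causal curves in I×X converging uniformly to a causal curve γ, then limsup_{j→∞} τ(γ_j) ≤ τ(γ). -/

import Mathlib

open Filter MeasureTheory Set Topology
open scoped ENNReal NNReal

noncomputable section

/-- The metric speed of a curve `β` at time `t` w.r.t. a distance function `dist`. -/
def mSpeed {X : Type*} (dst : X → X → ℝ) (β : ℝ → X) (t : ℝ) : ℝ :=
  Filter.limsup (fun e : ℝ => dst (β (t + e)) (β t) / |e|) (nhdsWithin (0 : ℝ) {0}ᶜ)

/-- The generalized metric speed `v_β(s,t)` of a curve `β` w.r.t. the family of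
metrics `d`. -/
def genSpeed {X : Type*} (d : ℝ → X → X → ℝ) (β : ℝ → X) (s t : ℝ) : ℝ :=
  Filter.limsup (fun e : ℝ => (∫ u in t..(t + e), mSpeed (d s) β u) / e)
    (nhdsWithin (0 : ℝ) {0}ᶜ)

/-- Absolute continuity of a curve on `[a,b]` w.r.t. a distance function. -/
def ACOn {X : Type*} (dst : X → X → ℝ) (β : ℝ → X) (a b : ℝ) : Prop :=
  ∃ g : ℝ → ℝ, MeasureTheory.IntegrableOn g (Set.Icc a b) ∧
    ∀ ⦃t u : ℝ⦄, t ∈ Set.Icc a b → u ∈ Set.Icc a b → t ≤ u →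
      dst (β t) (β u) ≤ ∫ r in t..u, g r

/-- The standard distance on `ℝ`. -/
def rdist : ℝ → ℝ → ℝ := fun x y => |x - y|

/-- `d` is a family of metrics on `X` indexed by `s ∈ I`, each generating the
topology of `X`. -/
def IsMetricFamily {X : Type*} [TopologicalSpace X] (I : Set ℝ) (d : ℝ → X → X → ℝ) : Prop :=
  ∀ s ∈ I,
    (∀ x : X, d s x x = 0) ∧ (∀ x y : X, x ≠ y → 0 < d s x y) ∧
    (∀ x y : X, d s x y = d s y x) ∧ (∀ x y z : X, d s x z ≤ d s x y + d s y z) ∧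
    (∀ x : X, (nhds x).HasBasis (fun ε : ℝ => 0 < ε) (fun ε => {y | d s x y < ε}))

/-- Condition (C): local uniform continuity of `s ↦ d_s` in a logarithmic sense. -/
def CondC {X : Type*} [TopologicalSpace X] (I : Set ℝ) (d : ℝ → X → X → ℝ) : Prop :=
  ∀ J : Set ℝ, ∀ K : Set X, J ⊆ I → IsCompact J → IsCompact K →
    ∃ r > (0 : ℝ), ∃ ω : ℝ → ℝ, ω 0 = 0 ∧ Monotone ω ∧ ContinuousAt ω 0 ∧
      ∀ s ∈ J, ∀ s' ∈ J, ∀ x ∈ K, ∀ y ∈ K, x ≠ y →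
        sInf ((fun u => d u x y) '' J) < r →
        |Real.log (d s x y / d s' x y)| ≤ ω |s - s'|

/-- Condition (L): local log-Lipschitz dependence of `d_s` on `s`. -/
def CondL {X : Type*} [TopologicalSpace X] (I : Set ℝ) (d : ℝ → X → X → ℝ) : Prop :=
  ∀ J : Set ℝ, ∀ K : Set X, J ⊆ I → IsCompact J → IsCompact K →
    ∃ C > (0 : ℝ), ∃ r > (0 : ℝ),
      ∀ s ∈ J, ∀ s' ∈ J, ∀ x ∈ K, ∀ y ∈ K, x ≠ y →
        sInf ((fun u => d u x y) '' J) < r →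
        |Real.log (d s x y / d s' x y)| ≤ C * |s - s'|

/-- Condition (H): Lipschitz continuity of `h` in the time variable, locally
uniformly. -/
def CondH {X : Type*} [TopologicalSpace X] (I : Set ℝ) (h : ℝ → X → ℝ) : Prop :=
  ∀ J : Set ℝ, ∀ K : Set X, J ⊆ I → IsCompact J → IsCompact K →
    ∃ C' > (0 : ℝ), ∀ s ∈ J, ∀ s' ∈ J, ∀ x ∈ K, |h s x - h s' x| ≤ C' * |s - s'|

/-- A curve `(α, β) : [a,b] → I × X` with both components absolutely continuous. -/
def CurveIn {X : Type*} (I : Set ℝ) (d : ℝ → X → X → ℝ) (α : ℝ → ℝ) (β : ℝ → X)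
    (a b : ℝ) : Prop :=
  a < b ∧ ACOn rdist α a b ∧ (∀ s ∈ I, ACOn (d s) β a b) ∧ ∀ t ∈ Set.Icc a b, α t ∈ I

/-- Future directed: `α' > 0` a.e. -/
def FutureDirected (α : ℝ → ℝ) (a b : ℝ) : Prop :=
  ∀ᵐ t : ℝ, t ∈ Set.Ioo a b → 0 < deriv α t

/-- Past directed: `α' < 0` a.e. -/
def PastDirected (α : ℝ → ℝ) (a b : ℝ) : Prop :=
  ∀ᵐ t : ℝ, t ∈ Set.Ioo a b → deriv α t < 0

/-- The causality inequality `v_β(α_t,t)² ≤ h(γ_t)² α'(t)²` a.e. -/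
def CausalIneq {X : Type*} (d : ℝ → X → X → ℝ) (h : ℝ → X → ℝ) (α : ℝ → ℝ)
    (β : ℝ → X) (a b : ℝ) : Prop :=
  ∀ᵐ t : ℝ, t ∈ Set.Ioo a b →
    (genSpeed d β (α t) t) ^ 2 ≤ (h (α t) (β t)) ^ 2 * (deriv α t) ^ 2

/-- The timelike inequality `v_β(α_t,t)² < h(γ_t)² α'(t)²` a.e. -/
def TimelikeIneq {X : Type*} (d : ℝ → X → X → ℝ) (h : ℝ → X → ℝ) (α : ℝ → ℝ)
    (β : ℝ → X) (a b : ℝ) : Prop :=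
  ∀ᵐ t : ℝ, t ∈ Set.Ioo a b →
    (genSpeed d β (α t) t) ^ 2 < (h (α t) (β t)) ^ 2 * (deriv α t) ^ 2

/-- Future directed causal curve. -/
def FutureCausal {X : Type*} (I : Set ℝ) (d : ℝ → X → X → ℝ) (h : ℝ → X → ℝ)
    (α : ℝ → ℝ) (β : ℝ → X) (a b : ℝ) : Prop :=
  CurveIn I d α β a b ∧ FutureDirected α a b ∧ CausalIneq d h α β a b

/-- Future directed timelike curve. -/
def FutureTimelike {X : Type*} (I : Set ℝ) (d : ℝ → X → X → ℝ) (h : ℝ → X → ℝ)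
    (α : ℝ → ℝ) (β : ℝ → X) (a b : ℝ) : Prop :=
  CurveIn I d α β a b ∧ FutureDirected α a b ∧ TimelikeIneq d h α β a b

/-- Causal curve (future or past directed). -/
def CausalCurve {X : Type*} (I : Set ℝ) (d : ℝ → X → X → ℝ) (h : ℝ → X → ℝ)
    (α : ℝ → ℝ) (β : ℝ → X) (a b : ℝ) : Prop :=
  CurveIn I d α β a b ∧ (FutureDirected α a b ∨ PastDirected α a b) ∧
    CausalIneq d h α β a b

/-- The causal relation `p ≤ q` in the generalized Lorentzian product. -/
def causalRel {X : Type*} (I : Set ℝ) (d : ℝ → X → X → ℝ) (h : ℝ → X → ℝ)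
    (p q : ℝ × X) : Prop :=
  ∃ a b α β, FutureCausal I d h α β a b ∧
    α a = p.1 ∧ β a = p.2 ∧ α b = q.1 ∧ β b = q.2

/-- The chronological relation `p ≪ q` in the generalized Lorentzian product. -/
def chronRel {X : Type*} (I : Set ℝ) (d : ℝ → X → X → ℝ) (h : ℝ → X → ℝ)
    (p q : ℝ × X) : Prop :=
  ∃ a b α β, FutureTimelike I d h α β a b ∧
    α a = p.1 ∧ β a = p.2 ∧ α b = q.1 ∧ β b = q.2

/-- The Lorentzian length of a curve. -/
def lorLen {X : Type*} (d : ℝ → X → X → ℝ) (h : ℝ → X → ℝ) (α : ℝ → ℝ) (β : ℝ → X)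
    (a b : ℝ) : ℝ :=
  ∫ t in a..b,
    Real.sqrt ((h (α t) (β t)) ^ 2 * (deriv α t) ^ 2 - (genSpeed d β (α t) t) ^ 2)

/-- The time separation function `τ` of the generalized Lorentzian product. -/
def timeSep {X : Type*} (I : Set ℝ) (d : ℝ → X → X → ℝ) (h : ℝ → X → ℝ)
    (p q : ℝ × X) : ℝ≥0∞ :=
  sSup {l | ∃ a b α β, FutureCausal I d h α β a b ∧
    α a = p.1 ∧ β a = p.2 ∧ α b = q.1 ∧ β b = q.2 ∧
    l = ENNReal.ofReal (lorLen d h α β a b)}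

end

open Filter MeasureTheory Set Topology
open scoped ENNReal

/-- `D` is a metric on `ℝ × X` generating the product topology. -/
def IsCompatibleProdMetric {X : Type*} [TopologicalSpace X]
    (D : (ℝ × X) → (ℝ × X) → ℝ) : Prop :=
  (∀ p, D p p = 0) ∧ (∀ p q, p ≠ q → 0 < D p q) ∧ (∀ p q, D p q = D q p) ∧
  (∀ p q r, D p r ≤ D p q + D q r) ∧
  (∀ p : ℝ × X, (nhds p).HasBasis (fun ε : ℝ => 0 < ε) (fun ε => {q | D p q < ε}))

/-!
Near an event `p = (s, x)` the metrics `d_{s'}` and the function `h` are almost constant, so the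
Lorentzian length is compared with the length `∫ √(H² α'² - L² v_β²)` for the single metric `d_s`
and constants `H`, `L`; on causal curves the error is a small multiple `κ` of `∫ |α'|`.

For this static length, the reverse Minkowski inequality bounds the integral over a window
`[t, t + ε]` by the chord length `√(H² (α (t + ε) - α t)² - L² d_s(β t, β (t + ε))²)`. Averaged over
`t`, the chord lengths dominate the length of the curve, pass to the limit along pointwise
convergent curves at fixed `ε`, and, divided by `ε`, converge to the static speed of the limit
curve as `ε → 0`, by existence of metric derivatives. A subdivision of the parameter interval glues
the local estimates.
-/

section MetricDerivative

/-- `β` is a curve on the whole line whose displacement between any two times is at most the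
integral of the nonnegative integrable function `g`. -/
structure IsSpeedBound {Y : Type*} [PseudoMetricSpace Y] (β : ℝ → Y) (g : ℝ → ℝ) : Prop where
  integrable : Integrable g
  nonneg : ∀ t, 0 ≤ g t
  dist_le : ∀ t u, t ≤ u → dist (β t) (β u) ≤ ∫ r in t..u, g r

/-- The metric derivative of the curve `β`, as the largest rate of change of the distances to the
countably many points `β q`; it takes the junk value `0` where these rates are unbounded. -/
noncomputable def metricDeriv {Y : Type*} [PseudoMetricSpace Y] (β : ℝ → Y) (t : ℝ) : ℝ :=
  ⨆ q : ℚ, |deriv (fun s => dist (β s) (β q)) t|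

lemma ae_tendsto_average {g : ℝ → ℝ} (hg : Integrable g) :
    ∀ᵐ t, Tendsto (fun e => (∫ r in t..(t + e), g r) / e) (𝓝[≠] 0) (𝓝 (g t)) := by
  filter_upwards [LocallyIntegrable.ae_hasDerivAt_integral hg.locallyIntegrable] with t ht
  refine (hasDerivAt_iff_tendsto_slope_zero.1 (ht t)).congr fun e => ?_
  rw [intervalIntegral.integral_same, sub_zero, smul_eq_mul, div_eq_inv_mul]

lemma mSpeed_nonneg {X : Type*} {dst : X → X → ℝ} (hdst : ∀ x y, 0 ≤ dst x y) (β : ℝ → X) (t : ℝ) :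
    0 ≤ mSpeed dst β t := by
  refine Real.sInf_nonneg fun c (hc : ∀ᶠ e in 𝓝[≠] (0 : ℝ), dst (β (t + e)) (β t) / |e| ≤ c) => ?_
  obtain ⟨e, he⟩ := hc.exists
  exact (div_nonneg (hdst _ _) (abs_nonneg _)).trans he

namespace IsSpeedBound

variable {Y : Type*} [PseudoMetricSpace Y] {β : ℝ → Y} {φ g : ℝ → ℝ}

lemma dist_le_abs (hβ : IsSpeedBound β g) (t u : ℝ) :
    dist (β t) (β u) ≤ |∫ r in t..u, g r| := by
  rcases le_total t u with h | h
  · exact (hβ.dist_le t u h).trans (le_abs_self _)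
  · rw [dist_comm, intervalIntegral.integral_symm, abs_neg]
    exact (hβ.dist_le u t h).trans (le_abs_self _)

lemma dist_div_abs_le (hβ : IsSpeedBound β g) (t e : ℝ) :
    dist (β (t + e)) (β t) / |e| ≤ |(∫ r in t..(t + e), g r) / e| := by
  rw [abs_div, dist_comm]
  gcongr
  exact hβ.dist_le_abs t (t + e)

lemma ae_tendsto_abs_average (hβ : IsSpeedBound β g) :
    ∀ᵐ t, Tendsto (fun e => |(∫ r in t..(t + e), g r) / e|) (𝓝[≠] 0) (𝓝 (g t)) := by
  filter_upwards [ae_tendsto_average hβ.integrable] with t ht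
  simpa only [abs_of_nonneg (hβ.nonneg t)] using ht.abs

lemma dist_le_dist_primitive (hβ : IsSpeedBound β g) (c t u : ℝ) :
    dist (β t) (β u) ≤ dist (∫ r in c..t, g r) (∫ r in c..u, g r) := by
  rw [Real.dist_eq, intervalIntegral.integral_interval_sub_left
    hβ.integrable.intervalIntegrable hβ.integrable.intervalIntegrable,
    intervalIntegral.integral_symm, abs_neg]
  exact hβ.dist_le_abs t u

lemma absolutelyContinuousOnInterval (hβ : IsSpeedBound β g) (a b : ℝ) :
    AbsolutelyContinuousOnInterval β a b := by
  have hg : AbsolutelyContinuousOnInterval (fun x => ∫ r in a..x, g r) a b :=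
    hβ.integrable.intervalIntegrable.absolutelyContinuousOnInterval_intervalIntegral left_mem_uIcc
  refine squeeze_zero (fun E => Finset.sum_nonneg fun _ _ => dist_nonneg) (fun E => ?_) hg
  exact Finset.sum_le_sum fun i _ => hβ.dist_le_dist_primitive a _ _

lemma continuous (hβ : IsSpeedBound β g) : Continuous β := by
  rw [continuous_iff_continuousAt]
  intro t
  have hprimitive : Continuous fun u => ∫ r in (0 : ℝ)..u, g r :=
    intervalIntegral.continuous_primitive (fun _ _ => hβ.integrable.intervalIntegrable) 0
  exact tendsto_iff_dist_tendsto_zero.2 (squeeze_zero (fun _ => dist_nonneg)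
    (fun u => hβ.dist_le_dist_primitive 0 u t)
    (tendsto_iff_dist_tendsto_zero.1 (hprimitive.tendsto t)))

lemma dist_const (hβ : IsSpeedBound β g) (y : Y) : IsSpeedBound (fun t => dist (β t) y) g where
  integrable := hβ.integrable
  nonneg := hβ.nonneg
  dist_le t u h := (dist_dist_dist_le_left _ _ _).trans (hβ.dist_le t u h)

lemma ae_differentiableAt (hφ : IsSpeedBound φ g) : ∀ᵐ t, DifferentiableAt ℝ φ t := by
  have hbounded : ∀ᵐ t, ∀ n : ℕ, t ∈ uIcc (-(n : ℝ)) n → DifferentiableAt ℝ φ t :=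
    ae_all_iff.2 fun n => (hφ.absolutelyContinuousOnInterval _ _).ae_differentiableAt
  filter_upwards [hbounded] with t ht
  obtain ⟨n, hn⟩ := exists_nat_ge |t|
  refine ht n (Icc_subset_uIcc (abs_le.1 hn))

lemma ae_tendsto_abs_slope (hφ : IsSpeedBound φ g) :
    ∀ᵐ t, Tendsto (fun e => dist (φ (t + e)) (φ t) / |e|) (𝓝[≠] 0) (𝓝 |deriv φ t|) := by
  filter_upwards [hφ.ae_differentiableAt] with t ht
  refine (hasDerivAt_iff_tendsto_slope_zero.1 ht.hasDerivAt).abs.congr fun e => ?_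
  rw [smul_eq_mul, abs_mul, abs_inv, Real.dist_eq, div_eq_inv_mul]

lemma ae_abs_deriv_le (hφ : IsSpeedBound φ g) : ∀ᵐ t, |deriv φ t| ≤ g t := by
  filter_upwards [hφ.ae_tendsto_abs_slope, hφ.ae_tendsto_abs_average] with t hslope haverage
  exact le_of_tendsto_of_tendsto' hslope haverage fun e => hφ.dist_div_abs_le t e

lemma integrable_deriv (hφ : IsSpeedBound φ g) : Integrable (deriv φ) :=
  hφ.integrable.mono' (measurable_deriv φ).aestronglyMeasurable hφ.ae_abs_deriv_le

lemma integral_deriv (hφ : IsSpeedBound φ g) (t u : ℝ) :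
    ∫ r in t..u, deriv φ r = φ u - φ t :=
  (hφ.absolutelyContinuousOnInterval t u).integral_deriv_eq_sub

end IsSpeedBound

section metricDeriv

variable {Y : Type*} [PseudoMetricSpace Y] {β : ℝ → Y} {g : ℝ → ℝ}

lemma metricDeriv_nonneg (β : ℝ → Y) (t : ℝ) : 0 ≤ metricDeriv β t :=
  Real.iSup_nonneg fun _ => abs_nonneg _

lemma measurable_metricDeriv (β : ℝ → Y) : Measurable (metricDeriv β) :=
  .iSup fun _ => (measurable_deriv _).abs

namespace IsSpeedBound

lemma ae_abs_deriv_dist_le (hβ : IsSpeedBound β g) :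
    ∀ᵐ t, ∀ q : ℚ, |deriv (fun s => dist (β s) (β q)) t| ≤ g t :=
  ae_all_iff.2 fun q => (hβ.dist_const (β q)).ae_abs_deriv_le

lemma ae_abs_deriv_dist_le_metricDeriv (hβ : IsSpeedBound β g) :
    ∀ᵐ t, ∀ q : ℚ, |deriv (fun s => dist (β s) (β q)) t| ≤ metricDeriv β t := by
  filter_upwards [hβ.ae_abs_deriv_dist_le] with t ht
  exact fun q => le_ciSup (f := fun q : ℚ => |deriv (fun s => dist (β s) (β q)) t|)
    ⟨g t, forall_mem_range.2 ht⟩ q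

lemma integrable_metricDeriv (hβ : IsSpeedBound β g) : Integrable (metricDeriv β) := by
  refine hβ.integrable.mono' (measurable_metricDeriv β).aestronglyMeasurable ?_
  filter_upwards [hβ.ae_abs_deriv_dist_le] with t ht
  rw [Real.norm_of_nonneg (metricDeriv_nonneg β t)]
  exact ciSup_le ht

lemma dist_le_integral_metricDeriv (hβ : IsSpeedBound β g) {t u : ℝ} (htu : t ≤ u) :
    dist (β t) (β u) ≤ ∫ r in t..u, metricDeriv β r := by
  have hrat : ∀ q : ℚ,
      |dist (β u) (β q) - dist (β t) (β q)| ≤ ∫ r in t..u, metricDeriv β r := by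
    intro q
    have hq := hβ.dist_const (β q)
    rw [← hq.integral_deriv t u]
    refine (intervalIntegral.abs_integral_le_integral_abs htu).trans ?_
    refine intervalIntegral.integral_mono_ae htu hq.integrable_deriv.abs.intervalIntegrable
      hβ.integrable_metricDeriv.intervalIntegrable ?_
    filter_upwards [hβ.ae_abs_deriv_dist_le_metricDeriv] with r hr using hr q
  have hclosed : IsClosed {x : ℝ |
      |dist (β u) (β x) - dist (β t) (β x)| ≤ ∫ r in t..u, metricDeriv β r} := by
    have := hβ.continuous
    exact isClosed_le (by fun_prop) continuous_const
  have hall : ∀ x : ℝ, |dist (β u) (β x) - dist (β t) (β x)| ≤ ∫ r in t..u, metricDeriv β r :=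
    Rat.isDenseEmbedding_coe_real.dense.induction (forall_mem_range.2 hrat) hclosed
  simpa only [dist_self, zero_sub, abs_neg, abs_dist] using hall u

lemma isSpeedBound_metricDeriv (hβ : IsSpeedBound β g) : IsSpeedBound β (metricDeriv β) where
  integrable := hβ.integrable_metricDeriv
  nonneg := metricDeriv_nonneg β
  dist_le _ _ := hβ.dist_le_integral_metricDeriv

lemma ae_tendsto_metricDeriv (hβ : IsSpeedBound β g) :
    ∀ᵐ t, Tendsto (fun e => dist (β (t + e)) (β t) / |e|) (𝓝[≠] 0) (𝓝 (metricDeriv β t)) := by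
  have hm := hβ.isSpeedBound_metricDeriv
  have hslope := ae_all_iff.2 fun q : ℚ => (hβ.dist_const (β q)).ae_tendsto_abs_slope
  filter_upwards [hslope, hm.ae_tendsto_abs_average] with t hslope haverage
  refine tendsto_order.2 ⟨fun c hc => ?_, fun c hc => ?_⟩
  · obtain ⟨q, hq⟩ := exists_lt_of_lt_ciSup hc
    filter_upwards [(hslope q).eventually_const_lt hq] with e he
    refine he.trans_le ?_
    gcongr
    exact dist_dist_dist_le_left _ _ _
  · filter_upwards [haverage.eventually_lt_const hc] with e he
    exact (hm.dist_div_abs_le t e).trans_lt he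

lemma metricDeriv_ae_eq_mSpeed (hβ : IsSpeedBound β g) :
    metricDeriv β =ᵐ[volume] mSpeed dist β := by
  filter_upwards [hβ.ae_tendsto_metricDeriv] with t ht
  exact ht.limsup_eq.symm

lemma isSpeedBound_mSpeed (hβ : IsSpeedBound β g) : IsSpeedBound β (mSpeed dist β) where
  integrable := hβ.integrable_metricDeriv.congr hβ.metricDeriv_ae_eq_mSpeed
  nonneg := mSpeed_nonneg (fun _ _ => dist_nonneg) β
  dist_le _ _ htu := (hβ.dist_le_integral_metricDeriv htu).trans_eq
    (intervalIntegral.integral_congr_ae (hβ.metricDeriv_ae_eq_mSpeed.mono fun _ ht _ => ht))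

lemma ae_tendsto_mSpeed (hβ : IsSpeedBound β g) :
    ∀ᵐ t, Tendsto (fun e => dist (β (t + e)) (β t) / |e|) (𝓝[≠] 0) (𝓝 (mSpeed dist β t)) := by
  filter_upwards [hβ.ae_tendsto_metricDeriv, hβ.metricDeriv_ae_eq_mSpeed] with t hlim ht
  rwa [← ht]

end IsSpeedBound

end metricDeriv

end MetricDerivative

section Integrals

variable {Ω : Type*} [MeasurableSpace Ω] {μ : Measure Ω}

lemma memLp_two_sqrt {f : Ω → ℝ} (hf : Integrable f μ) (hf0 : 0 ≤ᵐ[μ] f) :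
    MemLp (fun t => √(f t)) 2 μ := by
  refine (memLp_two_iff_integrable_sq
    (Real.continuous_sqrt.comp_aestronglyMeasurable hf.aestronglyMeasurable)).2 (hf.congr ?_)
  filter_upwards [hf0] with t ht using (Real.sq_sqrt ht).symm

lemma integral_sqrt_mul_sqrt_le {f g : Ω → ℝ} (hf : Integrable f μ) (hg : Integrable g μ)
    (hf0 : 0 ≤ᵐ[μ] f) (hg0 : 0 ≤ᵐ[μ] g) :
    ∫ t, √(f t) * √(g t) ∂μ ≤ √(∫ t, f t ∂μ) * √(∫ t, g t ∂μ) := by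
  have integral_sqrt_sq : ∀ f : Ω → ℝ, 0 ≤ᵐ[μ] f →
      ∫ t, √(f t) ^ (2 : ℝ) ∂μ = ∫ t, f t ∂μ := by
    intro f hf
    refine integral_congr_ae ?_
    filter_upwards [hf] with t ht
    rw [Real.rpow_two, Real.sq_sqrt ht]
  have hholder := integral_mul_le_Lp_mul_Lq_of_nonneg Real.HolderConjugate.two_two (μ := μ)
    (.of_forall fun t => Real.sqrt_nonneg (f t)) (.of_forall fun t => Real.sqrt_nonneg (g t))
    (by simpa using memLp_two_sqrt hf hf0) (by simpa using memLp_two_sqrt hg hg0)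
  rwa [integral_sqrt_sq f hf0, integral_sqrt_sq g hg0, ← Real.sqrt_eq_rpow,
    ← Real.sqrt_eq_rpow] at hholder

-- The reverse triangle inequality for a field of causal vectors in the Minkowski plane; in the null
-- coordinates `x - y` and `x + y` it is the Cauchy-Schwarz inequality.
lemma integral_sqrt_sq_sub_sq_le {x y : Ω → ℝ} (hx : Integrable x μ) (hy : Integrable y μ)
    (hy0 : 0 ≤ᵐ[μ] y) (hyx : y ≤ᵐ[μ] x) :
    ∫ t, √(x t ^ 2 - y t ^ 2) ∂μ ≤ √((∫ t, x t ∂μ) ^ 2 - (∫ t, y t ∂μ) ^ 2) := by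
  have hsub0 : 0 ≤ᵐ[μ] x - y := hyx.mono fun t ht => sub_nonneg.2 ht
  have hadd0 : 0 ≤ᵐ[μ] x + y := by
    filter_upwards [hy0, hyx] with t h0 hle using add_nonneg (h0.trans hle) h0
  calc ∫ t, √(x t ^ 2 - y t ^ 2) ∂μ
      = ∫ t, √((x - y) t) * √((x + y) t) ∂μ := by
        refine integral_congr_ae ?_
        filter_upwards [hsub0] with t ht
        rw [← Real.sqrt_mul ht, Pi.sub_apply, Pi.add_apply]
        ring_nf
    _ ≤ √(∫ t, (x - y) t ∂μ) * √(∫ t, (x + y) t ∂μ) :=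
        integral_sqrt_mul_sqrt_le (hx.sub hy) (hx.add hy) hsub0 hadd0
    _ = √((∫ t, x t ∂μ) ^ 2 - (∫ t, y t ∂μ) ^ 2) := by
        rw [← Real.sqrt_mul (integral_nonneg_of_ae hsub0), integral_sub' hx hy,
          integral_add' hx hy]
        ring_nf

lemma integrable_indicator_Ico_one (ε : ℝ) :
    Integrable ((Ico (-ε) 0).indicator fun _ => (1 : ℝ)) :=
  (integrable_indicator_iff measurableSet_Ico).2
    (integrableOn_const measure_Ico_lt_top.ne)

lemma integral_window_eq_convolution (f : ℝ → ℝ) {ε : ℝ} (hε : 0 ≤ ε) (t : ℝ) :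
    ∫ r in t..(t + ε), f r =
      convolution f ((Ico (-ε) 0).indicator fun _ => (1 : ℝ)) (ContinuousLinearMap.mul ℝ ℝ)
        volume t := by
  rw [intervalIntegral.integral_of_le (by linarith), ← integral_indicator measurableSet_Ioc]
  refine integral_congr_ae (.of_forall fun r => ?_)
  have hmem : t - r ∈ Ico (-ε) 0 ↔ r ∈ Ioc t (t + ε) := by grind
  by_cases hr : r ∈ Ioc t (t + ε)
  · simp [hr, hmem.2 hr]
  · simp [indicator_of_notMem hr, indicator_of_notMem (mt hmem.1 hr)]

lemma integrable_integral_window {f : ℝ → ℝ} (hf : Integrable f) {ε : ℝ} (hε : 0 ≤ ε) :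
    Integrable fun t => ∫ r in t..(t + ε), f r := by
  simp_rw [integral_window_eq_convolution f hε]
  exact hf.integrable_convolution _ (integrable_indicator_Ico_one ε)

lemma integral_integral_window {f : ℝ → ℝ} (hf : Integrable f) {ε : ℝ} (hε : 0 ≤ ε) :
    ∫ t, ∫ r in t..(t + ε), f r = ε * ∫ t, f t := by
  simp_rw [integral_window_eq_convolution f hε]
  rw [integral_convolution (ContinuousLinearMap.mul ℝ ℝ) hf (integrable_indicator_Ico_one ε),
    integral_indicator measurableSet_Ico]
  simp [hε, mul_comm]

variable {ι : Type*} {l : Filter ι} [l.IsCountablyGenerated]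

lemma eventually_lt_integral_of_tendsto_ae [l.NeBot] {f : ι → Ω → ℝ} {f₀ : Ω → ℝ}
    (hf : ∀ i, Integrable (f i) μ) (hf₀ : Integrable f₀ μ) (hnonneg : ∀ i, 0 ≤ᵐ[μ] f i)
    (hlim : ∀ᵐ t ∂μ, Tendsto (fun i => f i t) l (𝓝 (f₀ t))) {c : ℝ} (hc : c < ∫ t, f₀ t ∂μ) :
    ∀ᶠ i in l, c < ∫ t, f i t ∂μ := by
  rcases lt_or_ge c 0 with hneg | hc0
  · exact .of_forall fun i => hneg.trans_le (integral_nonneg_of_ae (hnonneg i))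
  have hnonneg₀ : 0 ≤ᵐ[μ] f₀ := by
    obtain ⟨seq, hseq⟩ := exists_seq_tendsto l
    filter_upwards [hlim, ae_all_iff.2 fun n => hnonneg (seq n)] with t ht h0
    exact ge_of_tendsto' (ht.comp hseq) h0
  have hfatou : ENNReal.ofReal (∫ t, f₀ t ∂μ) ≤
      liminf (fun i => ENNReal.ofReal (∫ t, f i t ∂μ)) l := by
    simp_rw [fun i => ofReal_integral_eq_lintegral_ofReal (hf i) (hnonneg i)]
    rw [ofReal_integral_eq_lintegral_ofReal hf₀ hnonneg₀]
    refine le_trans (lintegral_mono_ae ?_)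
      (lintegral_liminf_le' fun i => (hf i).aemeasurable.ennreal_ofReal)
    filter_upwards [hlim] with t ht using (ENNReal.tendsto_ofReal ht).liminf_eq.ge
  have hlt := ((ENNReal.ofReal_lt_ofReal_iff_of_nonneg hc0).2 hc).trans_le hfatou
  filter_upwards [eventually_lt_of_lt_liminf hlt] with i hi
  exact (ENNReal.ofReal_lt_ofReal_iff_of_nonneg hc0).1 hi

lemma eventually_integral_lt_of_tendsto_ae [l.NeBot] {f g : ι → Ω → ℝ} {f₀ g₀ : Ω → ℝ}
    (hf : ∀ i, Integrable (f i) μ) (hg : ∀ i, Integrable (g i) μ) (hf₀ : Integrable f₀ μ)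
    (hg₀ : Integrable g₀ μ) (hfg : ∀ i, f i ≤ᵐ[μ] g i)
    (hint : ∀ i, ∫ t, g i t ∂μ ≤ ∫ t, g₀ t ∂μ)
    (hflim : ∀ᵐ t ∂μ, Tendsto (fun i => f i t) l (𝓝 (f₀ t)))
    (hglim : ∀ᵐ t ∂μ, Tendsto (fun i => g i t) l (𝓝 (g₀ t))) {c : ℝ}
    (hc : ∫ t, f₀ t ∂μ < c) : ∀ᶠ i in l, ∫ t, f i t ∂μ < c := by
  have hfatou := eventually_lt_integral_of_tendsto_ae (l := l)
    (fun i => (hg i).sub (hf i)) (hg₀.sub hf₀)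
    (fun i => (hfg i).mono fun t ht => sub_nonneg.2 ht)
    (by filter_upwards [hflim, hglim] with t ht ht' using ht'.sub ht)
    (c := ∫ t, g₀ t ∂μ - c) (by rw [integral_sub' hg₀ hf₀]; linarith)
  filter_upwards [hfatou] with i hi
  rw [integral_sub' (hg i) (hf i)] at hi
  linarith [hint i]

end Integrals

section Monotone

lemma abs_sub_le_of_monotone_or_antitone {φ : ℝ → ℝ} (hφ : Monotone φ ∨ Antitone φ) {u v : ℝ}
    (hleft : ∀ t ≤ u, φ t = φ u) (hright : ∀ t, v ≤ t → φ t = φ v) (t w : ℝ) :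
    |φ w - φ t| ≤ |φ v - φ u| := by
  have hmem : ∀ r, φ r ∈ uIcc (φ u) (φ v) := by
    intro r
    rcases le_total r u with hru | hur
    · exact hleft r hru ▸ left_mem_uIcc
    rcases le_total v r with hvr | hrv
    · exact hright r hvr ▸ right_mem_uIcc
    rcases hφ with hmono | hanti
    · exact Icc_subset_uIcc ⟨hmono hur, hmono hrv⟩
    · exact Icc_subset_uIcc' ⟨hanti hrv, hanti hur⟩
  exact abs_sub_le_of_uIcc_subset_uIcc (uIcc_subset_uIcc (hmem t) (hmem w))

lemma IsSpeedBound.integral_abs_deriv {φ g : ℝ → ℝ} (hφ : IsSpeedBound φ g)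
    (hmono : Monotone φ ∨ Antitone φ) {t w : ℝ} (htw : t ≤ w) :
    ∫ r in t..w, |deriv φ r| = |φ w - φ t| := by
  rcases hmono with hmono | hanti
  · simp_rw [abs_of_nonneg hmono.deriv_nonneg]
    rw [hφ.integral_deriv, abs_of_nonneg (sub_nonneg.2 (hmono htw))]
  · simp_rw [abs_of_nonpos hanti.deriv_nonpos]
    rw [intervalIntegral.integral_neg, hφ.integral_deriv,
      abs_of_nonpos (sub_nonpos.2 (hanti htw))]

end Monotone

section StaticProduct

/-- The length element of the curve `(A, B)` in the static product with metric
`-H² dt² + L² dst²`. -/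
noncomputable def staticSpeed {Y : Type*} (dst : Y → Y → ℝ) (H L : ℝ) (A : ℝ → ℝ) (B : ℝ → Y)
    (t : ℝ) : ℝ :=
  √((H * |deriv A t|) ^ 2 - (L * mSpeed dst B t) ^ 2)

/-- The Lorentzian length, in the static product with metric `-H² dt² + L² dist²`, of the chord
joining the points of `(A, B)` at parameters `t` and `t + ε`. -/
noncomputable def chordLength {Y : Type*} [PseudoMetricSpace Y] (H L : ℝ) (A : ℝ → ℝ) (B : ℝ → Y)
    (ε t : ℝ) : ℝ :=
  √((H * |A (t + ε) - A t|) ^ 2 - (L * dist (B (t + ε)) (B t)) ^ 2)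

lemma sqrt_sq_sub_sq_le {x : ℝ} (hx : 0 ≤ x) (y : ℝ) : √(x ^ 2 - y ^ 2) ≤ x :=
  Real.sqrt_le_iff.2 ⟨hx, sub_le_self _ (sq_nonneg y)⟩

variable {Y : Type*} [PseudoMetricSpace Y] {H L u v ε : ℝ} {A g k : ℝ → ℝ} {B : ℝ → Y}

lemma staticSpeed_nonneg (t : ℝ) : 0 ≤ staticSpeed dist H L A B t := Real.sqrt_nonneg _

lemma chordLength_nonneg (t : ℝ) : 0 ≤ chordLength H L A B ε t := Real.sqrt_nonneg _

lemma integrable_staticSpeed (hH : 0 ≤ H) (hA : IsSpeedBound A g) (hB : IsSpeedBound B k) :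
    Integrable (staticSpeed dist H L A B) := by
  have hderiv := hA.integrable_deriv.abs
  refine (hderiv.const_mul H).mono' (Real.continuous_sqrt.comp_aestronglyMeasurable
    (((hderiv.aestronglyMeasurable.const_mul H).pow 2).sub
      ((hB.isSpeedBound_mSpeed.integrable.aestronglyMeasurable.const_mul L).pow 2)))
    (.of_forall fun t => ?_)
  rw [Real.norm_of_nonneg (staticSpeed_nonneg t)]
  exact sqrt_sq_sub_sq_le (by positivity) _

lemma chordLength_le (hH : 0 ≤ H) (ε t : ℝ) :
    chordLength H L A B ε t ≤ H * |A (t + ε) - A t| :=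
  sqrt_sq_sub_sq_le (by positivity) _

lemma chordLength_le_integral_window (hH : 0 ≤ H) (hA : IsSpeedBound A g) (hε : 0 ≤ ε) (t : ℝ) :
    chordLength H L A B ε t ≤ ∫ r in t..(t + ε), H * |deriv A r| := by
  refine (chordLength_le hH ε t).trans ?_
  rw [intervalIntegral.integral_const_mul, ← hA.integral_deriv]
  gcongr
  exact intervalIntegral.abs_integral_le_integral_abs (by linarith)

lemma continuous_chordLength (hA : IsSpeedBound A g) (hB : IsSpeedBound B k) (ε : ℝ) :
    Continuous (chordLength H L A B ε) := by
  have := hA.continuous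
  have := hB.continuous
  unfold chordLength
  fun_prop

lemma integrable_chordLength (hH : 0 ≤ H) (hA : IsSpeedBound A g) (hB : IsSpeedBound B k)
    (hε : 0 ≤ ε) : Integrable (chordLength H L A B ε) := by
  refine (integrable_integral_window (hA.integrable_deriv.abs.const_mul H) hε).mono'
    (continuous_chordLength hA hB ε).aestronglyMeasurable (.of_forall fun t => ?_)
  rw [Real.norm_of_nonneg (chordLength_nonneg t)]
  exact chordLength_le_integral_window hH hA hε t

-- A causal curve is no longer than its chord: this is the reverse triangle inequality, and it needs
-- `A` monotone so that `A` covers no more than its displacement.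
lemma integral_window_staticSpeed_le_chordLength (hL : 0 ≤ L) (hA : IsSpeedBound A g)
    (hB : IsSpeedBound B k) (hmono : Monotone A ∨ Antitone A)
    (hcone : ∀ᵐ t, L * mSpeed dist B t ≤ H * |deriv A t|) (hε : 0 ≤ ε) (t : ℝ) :
    ∫ r in t..(t + ε), staticSpeed dist H L A B r ≤ chordLength H L A B ε t := by
  have hle : t ≤ t + ε := by linarith
  have hspeed := hB.isSpeedBound_mSpeed
  rw [chordLength, ← hA.integral_abs_deriv hmono hle, intervalIntegral.integral_of_le hle,
    intervalIntegral.integral_of_le hle]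
  refine (integral_sqrt_sq_sub_sq_le (hA.integrable_deriv.abs.const_mul H).restrict
    (hspeed.integrable.const_mul L).restrict
    (.of_forall fun r => mul_nonneg hL (hspeed.nonneg r)) (ae_restrict_of_ae hcone)).trans ?_
  rw [integral_const_mul, integral_const_mul]
  refine Real.sqrt_le_sqrt (sub_le_sub_left ?_ _)
  gcongr
  rw [dist_comm, ← intervalIntegral.integral_of_le hle]
  exact hspeed.dist_le _ _ hle

lemma mul_integral_staticSpeed_le_integral_chordLength (hH : 0 ≤ H) (hL : 0 ≤ L)
    (hA : IsSpeedBound A g) (hB : IsSpeedBound B k) (hmono : Monotone A ∨ Antitone A)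
    (hcone : ∀ᵐ t, L * mSpeed dist B t ≤ H * |deriv A t|) (hε : 0 ≤ ε) :
    ε * ∫ t, staticSpeed dist H L A B t ≤ ∫ t, chordLength H L A B ε t := by
  rw [← integral_integral_window (integrable_staticSpeed hH hA hB) hε]
  exact integral_mono (integrable_integral_window (integrable_staticSpeed hH hA hB) hε)
    (integrable_chordLength hH hA hB hε)
    (integral_window_staticSpeed_le_chordLength hL hA hB hmono hcone hε)

lemma ae_tendsto_chordLength_div (hA : IsSpeedBound A g) (hB : IsSpeedBound B k) :
    ∀ᵐ t, Tendsto (fun ε => chordLength H L A B ε t / ε) (𝓝[>] 0)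
      (𝓝 (staticSpeed dist H L A B t)) := by
  filter_upwards [hA.ae_tendsto_abs_slope, hB.ae_tendsto_mSpeed] with t hslope hspeed
  have hlim := ((((hslope.const_mul H).pow 2).sub ((hspeed.const_mul L).pow 2)).sqrt).mono_left
    (nhdsWithin_mono (0 : ℝ) fun e (he : 0 < e) => he.ne')
  refine hlim.congr' ?_
  filter_upwards [self_mem_nhdsWithin] with ε (hε : 0 < ε)
  rw [chordLength, ← Real.sqrt_sq hε.le, ← Real.sqrt_div' _ (sq_nonneg _), Real.sqrt_sq hε.le,
    abs_of_pos hε, Real.dist_eq]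
  congr 1
  ring

lemma exists_integral_chordLength_lt (hH : 0 ≤ H) (hA : IsSpeedBound A g) (hB : IsSpeedBound B k)
    {c : ℝ} (hc : ∫ t, staticSpeed dist H L A B t < c) :
    ∃ ε > 0, ∫ t, chordLength H L A B ε t < ε * c := by
  obtain ⟨ε, -, hε, hεlim⟩ := exists_seq_strictAnti_tendsto' (zero_lt_one (α := ℝ))
  have hpos : ∀ n, 0 < ε n := fun n => (hε n).1
  have hεlim' : Tendsto ε atTop (𝓝[>] 0) :=
    tendsto_nhdsWithin_iff.2 ⟨hεlim, .of_forall hpos⟩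
  have hHA : Integrable fun t => H * |deriv A t| := hA.integrable_deriv.abs.const_mul H
  obtain ⟨n, hn⟩ := (eventually_integral_lt_of_tendsto_ae (μ := volume) (l := atTop)
    (f := fun n t => chordLength H L A B (ε n) t / ε n)
    (g := fun n t => (∫ r in t..(t + ε n), H * |deriv A r|) / ε n)
    (fun n => (integrable_chordLength hH hA hB (hpos n).le).div_const _)
    (fun n => (integrable_integral_window hHA (hpos n).le).div_const _)
    (integrable_staticSpeed hH hA hB) hHA
    (fun n => .of_forall fun t =>
      div_le_div_of_nonneg_right (chordLength_le_integral_window hH hA (hpos n).le t) (hpos n).le)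
    (fun n => by
      rw [integral_div, integral_integral_window hHA (hpos n).le,
        mul_div_cancel_left₀ _ (hpos n).ne'])
    ((ae_tendsto_chordLength_div hA hB).mono fun t ht => ht.comp hεlim')
    ((ae_tendsto_average hHA).mono fun t ht => ht.comp
      (hεlim'.mono_right (nhdsWithin_mono 0 fun e (he : 0 < e) => he.ne'))) hc).exists
  refine ⟨ε n, hpos n, ?_⟩
  rwa [integral_div, div_lt_iff₀' (hpos n)] at hn

lemma chordLength_le_indicator (hH : 0 ≤ H) (hmono : Monotone A ∨ Antitone A)
    (hleft : ∀ t ≤ u, A t = A u) (hright : ∀ t, v ≤ t → A t = A v) (hε : 0 ≤ ε) (t : ℝ) :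
    chordLength H L A B ε t ≤ (Icc (u - ε) v).indicator (fun _ => H * |A v - A u|) t := by
  refine (chordLength_le hH ε t).trans ?_
  by_cases ht : t ∈ Icc (u - ε) v
  · rw [indicator_of_mem ht]
    exact mul_le_mul_of_nonneg_left
      (abs_sub_le_of_monotone_or_antitone hmono hleft hright t (t + ε)) hH
  · suffices A (t + ε) = A t by simp [indicator_of_notMem ht, this]
    rcases not_and_or.1 ht with h | h
    · rw [hleft t (by linarith), hleft (t + ε) (by linarith)]
    · rw [hright t (by linarith), hright (t + ε) (by linarith)]

variable {ι : Type*} {l : Filter ι} [l.IsCountablyGenerated] {An : ι → ℝ → ℝ} {Bn : ι → ℝ → Y}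
  {gn kn : ι → ℝ → ℝ}

lemma tendsto_integral_chordLength (hH : 0 ≤ H)
    (hAn : ∀ i, IsSpeedBound (An i) (gn i)) (hBn : ∀ i, IsSpeedBound (Bn i) (kn i))
    (hmono : ∀ i, Monotone (An i) ∨ Antitone (An i))
    (hleft : ∀ i, ∀ t ≤ u, An i t = An i u) (hright : ∀ i, ∀ t, v ≤ t → An i t = An i v)
    (hAlim : ∀ t, Tendsto (fun i => An i t) l (𝓝 (A t)))
    (hBlim : ∀ t, Tendsto (fun i => Bn i t) l (𝓝 (B t))) (hε : 0 ≤ ε) :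
    Tendsto (fun i => ∫ t, chordLength H L (An i) (Bn i) ε t) l
      (𝓝 (∫ t, chordLength H L A B ε t)) := by
  have hbound := ((hAlim v).sub (hAlim u)).abs.eventually_le_const (lt_add_one _)
  refine tendsto_integral_filter_of_dominated_convergence
    ((Icc (u - ε) v).indicator fun _ => H * (|A v - A u| + 1))
    (.of_forall fun i => (continuous_chordLength (hAn i) (hBn i) ε).aestronglyMeasurable) ?_
    ((integrable_indicator_iff measurableSet_Icc).2 (integrableOn_const measure_Icc_lt_top.ne))
    (.of_forall fun t => ?_)
  · filter_upwards [hbound] with i hi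
    refine .of_forall fun t => ?_
    rw [Real.norm_of_nonneg (chordLength_nonneg t)]
    refine (chordLength_le_indicator hH (hmono i) (hleft i) (hright i) hε t).trans ?_
    exact indicator_le_indicator (mul_le_mul_of_nonneg_left hi hH)
  · exact ((((((hAlim _).sub (hAlim _)).abs).const_mul H).pow 2).sub
      ((((hBlim _).dist (hBlim _)).const_mul L).pow 2)).sqrt

theorem eventually_integral_staticSpeed_lt (hH : 0 ≤ H) (hL : 0 ≤ L)
    (hA : IsSpeedBound A g) (hB : IsSpeedBound B k)
    (hAn : ∀ i, IsSpeedBound (An i) (gn i)) (hBn : ∀ i, IsSpeedBound (Bn i) (kn i))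
    (hmono : ∀ i, Monotone (An i) ∨ Antitone (An i))
    (hleft : ∀ i, ∀ t ≤ u, An i t = An i u) (hright : ∀ i, ∀ t, v ≤ t → An i t = An i v)
    (hcone : ∀ᶠ i in l, ∀ᵐ t, L * mSpeed dist (Bn i) t ≤ H * |deriv (An i) t|)
    (hAlim : ∀ t, Tendsto (fun i => An i t) l (𝓝 (A t)))
    (hBlim : ∀ t, Tendsto (fun i => Bn i t) l (𝓝 (B t))) {c : ℝ}
    (hc : ∫ t, staticSpeed dist H L A B t < c) :
    ∀ᶠ i in l, ∫ t, staticSpeed dist H L (An i) (Bn i) t < c := by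
  obtain ⟨ε, hε, hchord⟩ := exists_integral_chordLength_lt hH hA hB hc
  have hlim := tendsto_integral_chordLength (L := L) hH hAn hBn hmono hleft hright hAlim hBlim hε.le
  filter_upwards [hlim.eventually_lt_const hchord, hcone] with i hi hconei
  exact lt_of_mul_lt_mul_left ((mul_integral_staticSpeed_le_integral_chordLength hH hL (hAn i)
    (hBn i) (hmono i) hconei hε.le).trans_lt hi) hε.le

end StaticProduct

section Clamp

/-- The curve `β` restricted to `[u, v]` and extended to the line by its end values. -/
noncomputable def clampCurve {Y : Type*} {u v : ℝ} (huv : u ≤ v) (β : ℝ → Y) : ℝ → Y :=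
  IccExtend huv ((Icc u v).domRestrict β)

variable {Y : Type*} {u v t : ℝ} (huv : u ≤ v)

section Germs

variable (β : ℝ → Y)

lemma clampCurve_of_mem (ht : t ∈ Icc u v) : clampCurve huv β t = β t := IccExtend_of_mem _ _ ht

lemma clampCurve_of_le (ht : t ≤ u) : clampCurve huv β t = β u := IccExtend_of_le_left _ _ ht

lemma clampCurve_of_ge (ht : v ≤ t) : clampCurve huv β t = β v := IccExtend_of_right_le _ _ ht

lemma clampCurve_eventuallyEq (ht : t ∈ Ioo u v) : clampCurve huv β =ᶠ[𝓝 t] β := by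
  filter_upwards [Ioo_mem_nhds ht.1 ht.2] with r hr
  exact clampCurve_of_mem huv β (Ioo_subset_Icc_self hr)

lemma clampCurve_eventuallyEq_const (ht : t ∉ Icc u v) :
    clampCurve huv β =ᶠ[𝓝 t] fun _ => clampCurve huv β t := by
  rcases not_and_or.1 ht with h | h
  · rw [clampCurve_of_le huv β (not_le.1 h).le]
    filter_upwards [Iio_mem_nhds (not_le.1 h)] with r hr using clampCurve_of_le huv β (le_of_lt hr)
  · rw [clampCurve_of_ge huv β (not_le.1 h).le]
    filter_upwards [Ioi_mem_nhds (not_le.1 h)] with r hr using clampCurve_of_ge huv β (le_of_lt hr)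

end Germs

lemma ae_mem_Ioo_or_notMem_Icc (u v : ℝ) : ∀ᵐ t : ℝ, t ∈ Ioo u v ∨ t ∉ Icc u v := by
  filter_upwards [Ioo_ae_eq_Icc (μ := volume) (a := u) (b := v)] with t ht
  exact (em (t ∈ Icc u v)).imp_left ht.mpr

lemma tendsto_const_add_punctured_nhds (t : ℝ) : Tendsto (fun e => t + e) (𝓝[≠] 0) (𝓝 t) := by
  have hcont : Tendsto (fun e => t + e) (𝓝 0) (𝓝 (t + 0)) := (continuous_const_add t).tendsto 0
  rw [add_zero] at hcont
  exact hcont.mono_left nhdsWithin_le_nhds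

lemma mSpeed_congr {dst : Y → Y → ℝ} {β β' : ℝ → Y} (h : β =ᶠ[𝓝 t] β') :
    mSpeed dst β t = mSpeed dst β' t := by
  refine limsup_congr ?_
  filter_upwards [(tendsto_const_add_punctured_nhds t).eventually h] with e he
  rw [he, h.self_of_nhds]

lemma ACOn.mono {dst : Y → Y → ℝ} {β : ℝ → Y} {a b : ℝ} (h : ACOn dst β a b) (hau : a ≤ u)
    (hvb : v ≤ b) : ACOn dst β u v := by
  obtain ⟨g, hg, hd⟩ := h
  have hsub : Icc u v ⊆ Icc a b := Icc_subset_Icc hau hvb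
  exact ⟨g, hg.mono_set hsub, fun t w ht hw htw => hd (hsub ht) (hsub hw) htw⟩

lemma integral_le_integral_of_ae_Ioo (huv : u ≤ v) {f g : ℝ → ℝ} (hf : IntegrableOn f (Ioo u v))
    (hg : IntegrableOn g (Ioo u v)) (hfg : ∀ᵐ t, t ∈ Ioo u v → f t ≤ g t) :
    ∫ t in u..v, f t ≤ ∫ t in u..v, g t := by
  rw [intervalIntegral.integral_of_le huv, intervalIntegral.integral_of_le huv,
    integral_Ioc_eq_integral_Ioo, integral_Ioc_eq_integral_Ioo]
  exact setIntegral_mono_on_ae hf hg measurableSet_Ioo hfg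

lemma ae_tendsto_average_of_integrableOn {f : ℝ → ℝ} (hf : IntegrableOn f (Ioo u v)) :
    ∀ᵐ t, t ∈ Ioo u v →
      Tendsto (fun e => (∫ r in t..(t + e), f r) / e) (𝓝[≠] 0) (𝓝 (f t)) := by
  filter_upwards [ae_tendsto_average ((integrable_indicator_iff measurableSet_Ioo).2 hf)]
    with t ht htI
  rw [indicator_of_mem htI] at ht
  refine ht.congr' ?_
  filter_upwards [(tendsto_const_add_punctured_nhds t).eventually (Ioo_mem_nhds htI.1 htI.2)]
    with e he
  congr 1
  exact intervalIntegral.integral_congr fun r hr =>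
    indicator_of_mem (ordConnected_Ioo.uIcc_subset htI he hr) _

variable [PseudoMetricSpace Y] {β : ℝ → Y}

lemma mSpeed_clampCurve (β : ℝ → Y) (ht : t ∈ Ioo u v) :
    mSpeed dist (clampCurve huv β) t = mSpeed dist β t :=
  mSpeed_congr (clampCurve_eventuallyEq huv β ht)

lemma mSpeed_clampCurve_of_notMem (β : ℝ → Y) (ht : t ∉ Icc u v) :
    mSpeed dist (clampCurve huv β) t = 0 := by
  rw [mSpeed_congr (clampCurve_eventuallyEq_const huv β ht)]
  simp [mSpeed]

namespace ACOn

lemma exists_isSpeedBound (h : ACOn dist β u v) : ∃ g, IsSpeedBound (clampCurve huv β) g := by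
  obtain ⟨g, hg, hd⟩ := h
  have hG : Integrable ((Icc u v).indicator fun r => |g r|) :=
    (integrable_indicator_iff measurableSet_Icc).2 hg.abs
  have hG0 : ∀ r, 0 ≤ (Icc u v).indicator (fun r => |g r|) r :=
    indicator_nonneg fun _ _ => abs_nonneg _
  refine ⟨_, hG, hG0, fun t w htw => ?_⟩
  let p := projIcc u v huv
  have hp : p t ≤ p w := monotone_projIcc huv htw
  have hsub : Ioc (p t : ℝ) (p w) ⊆ Ioc t w ∩ Icc u v := by
    intro r hr
    simp only [p, coe_projIcc, mem_Ioc] at hr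
    grind
  calc dist (β (p t)) (β (p w))
      ≤ ∫ r in p t..p w, g r := hd (p t).2 (p w).2 hp
    _ ≤ ∫ r in p t..p w, |g r| := (le_abs_self _).trans
        (intervalIntegral.abs_integral_le_integral_abs hp)
    _ = ∫ r in Ioc (p t : ℝ) (p w), (Icc u v).indicator (fun r => |g r|) r := by
        rw [intervalIntegral.integral_of_le hp]
        exact setIntegral_congr_fun measurableSet_Ioc fun r hr =>
          (indicator_of_mem (hsub hr).2 fun r => |g r|).symm
    _ ≤ ∫ r in t..w, (Icc u v).indicator (fun r => |g r|) r := by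
        rw [intervalIntegral.integral_of_le htw]
        exact setIntegral_mono_set hG.integrableOn (.of_forall hG0)
          (hsub.trans inter_subset_left).eventuallyLE

lemma continuousOn (huv : u ≤ v) (h : ACOn dist β u v) : ContinuousOn β (Icc u v) := by
  obtain ⟨g, hg⟩ := h.exists_isSpeedBound huv
  exact hg.continuous.continuousOn.congr fun t ht => (clampCurve_of_mem huv β ht).symm

lemma ae_tendsto_mSpeed (huv : u ≤ v) (h : ACOn dist β u v) :
    ∀ᵐ t, t ∈ Ioo u v → Tendsto (fun e => dist (β (t + e)) (β t) / |e|) (𝓝[≠] 0)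
      (𝓝 (mSpeed dist β t)) := by
  obtain ⟨g, hg⟩ := h.exists_isSpeedBound huv
  filter_upwards [hg.ae_tendsto_mSpeed] with t ht htI
  have hgerm := clampCurve_eventuallyEq huv β htI
  rw [mSpeed_clampCurve huv β htI, hgerm.self_of_nhds] at ht
  refine ht.congr' ?_
  filter_upwards [(tendsto_const_add_punctured_nhds t).eventually hgerm] with e he
  rw [he]

lemma integrableOn_mSpeed (huv : u ≤ v) (h : ACOn dist β u v) :
    IntegrableOn (mSpeed dist β) (Ioo u v) := by
  obtain ⟨g, hg⟩ := h.exists_isSpeedBound huv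
  exact hg.isSpeedBound_mSpeed.integrable.integrableOn.congr_fun
    (fun t ht => mSpeed_clampCurve huv β ht) measurableSet_Ioo

variable {A : ℝ → ℝ}

lemma integrableOn_deriv (huv : u ≤ v) (h : ACOn rdist A u v) :
    IntegrableOn (deriv A) (Ioo u v) := by
  obtain ⟨g, hg⟩ := ACOn.exists_isSpeedBound huv h
  exact hg.integrable_deriv.integrableOn.congr_fun
    (fun t ht => (clampCurve_eventuallyEq huv A ht).deriv_eq) measurableSet_Ioo

lemma integral_deriv (huv : u ≤ v) (h : ACOn rdist A u v) : ∫ r in u..v, deriv A r = A v - A u := by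
  obtain ⟨g, hg⟩ := ACOn.exists_isSpeedBound huv h
  have hclamp := hg.integral_deriv u v
  rw [clampCurve_of_le huv A le_rfl, clampCurve_of_ge huv A le_rfl] at hclamp
  rw [← hclamp]
  exact intervalIntegral.integral_congr_Ioo_of_le huv fun t ht =>
    (clampCurve_eventuallyEq huv A ht).deriv_eq.symm

lemma monotoneOn (h : ACOn rdist A u v) (hA : FutureDirected A u v) :
    MonotoneOn A (Icc u v) := by
  intro t ht w hw htw
  rw [← sub_nonneg, ← (h.mono ht.1 hw.2).integral_deriv htw]
  refine (intervalIntegral.integral_zero (μ := volume)).symm.trans_le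
    (integral_le_integral_of_ae_Ioo htw integrableOn_zero
      ((h.mono ht.1 hw.2).integrableOn_deriv htw) ?_)
  filter_upwards [hA] with r hr hrI
  exact (hr (Ioo_subset_Ioo ht.1 hw.2 hrI)).le

lemma antitoneOn (h : ACOn rdist A u v) (hA : PastDirected A u v) :
    AntitoneOn A (Icc u v) := by
  intro t ht w hw htw
  rw [← sub_nonpos, ← (h.mono ht.1 hw.2).integral_deriv htw]
  refine (integral_le_integral_of_ae_Ioo htw ((h.mono ht.1 hw.2).integrableOn_deriv htw)
    integrableOn_zero ?_).trans_eq intervalIntegral.integral_zero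
  filter_upwards [hA] with r hr hrI
  exact (hr (Ioo_subset_Ioo ht.1 hw.2 hrI)).le

lemma monotone_or_antitone_clampCurve (h : ACOn rdist A u v)
    (hA : FutureDirected A u v ∨ PastDirected A u v) :
    Monotone (clampCurve huv A) ∨ Antitone (clampCurve huv A) :=
  hA.imp
    (fun hA _ _ hst => h.monotoneOn hA (projIcc u v huv _).2 (projIcc u v huv _).2
      (monotone_projIcc huv hst))
    (fun hA _ _ hst => h.antitoneOn hA (projIcc u v huv _).2 (projIcc u v huv _).2
      (monotone_projIcc huv hst))

end ACOn

section StaticSpeed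

variable {H L : ℝ}

lemma staticSpeed_clampCurve_ae_eq (A : ℝ → ℝ) (B : ℝ → Y) :
    staticSpeed dist H L (clampCurve huv A) (clampCurve huv B) =ᵐ[volume]
      (Ioo u v).indicator (staticSpeed dist H L A B) := by
  filter_upwards [ae_mem_Ioo_or_notMem_Icc u v] with t ht
  rcases ht with ht | ht
  · rw [indicator_of_mem ht, staticSpeed, staticSpeed, mSpeed_clampCurve huv B ht,
      (clampCurve_eventuallyEq huv A ht).deriv_eq]
  · rw [indicator_of_notMem (notMem_subset Ioo_subset_Icc_self ht), staticSpeed,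
      (clampCurve_eventuallyEq_const huv A ht).deriv_eq, mSpeed_clampCurve_of_notMem huv B ht]
    simp

lemma integral_staticSpeed_clampCurve (A : ℝ → ℝ) (B : ℝ → Y) :
    ∫ t, staticSpeed dist H L (clampCurve huv A) (clampCurve huv B) t =
      ∫ t in u..v, staticSpeed dist H L A B t := by
  rw [intervalIntegral.integral_of_le huv, integral_Ioc_eq_integral_Ioo,
    ← integral_indicator measurableSet_Ioo]
  exact integral_congr_ae (staticSpeed_clampCurve_ae_eq huv A B)

lemma integrableOn_staticSpeed (huv : u ≤ v) (hH : 0 ≤ H) {A : ℝ → ℝ} {B : ℝ → Y}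
    (hA : ACOn rdist A u v) (hB : ACOn dist B u v) :
    IntegrableOn (staticSpeed dist H L A B) (Ioo u v) := by
  obtain ⟨g, hg⟩ := ACOn.exists_isSpeedBound huv hA
  obtain ⟨k, hk⟩ := hB.exists_isSpeedBound huv
  exact (integrable_indicator_iff measurableSet_Ioo).1
    ((integrable_staticSpeed hH hg hk).congr (staticSpeed_clampCurve_ae_eq huv A B))

theorem eventually_intervalIntegral_staticSpeed_lt (huv : u ≤ v) (hH : 0 ≤ H) (hL : 0 ≤ L)
    {ι : Type*} {l : Filter ι} [l.IsCountablyGenerated] {A : ℝ → ℝ} {B : ℝ → Y}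
    {An : ι → ℝ → ℝ} {Bn : ι → ℝ → Y} (hA : ACOn rdist A u v) (hB : ACOn dist B u v)
    (hAn : ∀ i, ACOn rdist (An i) u v) (hBn : ∀ i, ACOn dist (Bn i) u v)
    (hdir : ∀ i, FutureDirected (An i) u v ∨ PastDirected (An i) u v)
    (hcone : ∀ᶠ i in l, ∀ᵐ t, t ∈ Ioo u v → L * mSpeed dist (Bn i) t ≤ H * |deriv (An i) t|)
    (hAlim : ∀ t ∈ Icc u v, Tendsto (fun i => An i t) l (𝓝 (A t)))
    (hBlim : ∀ t ∈ Icc u v, Tendsto (fun i => Bn i t) l (𝓝 (B t))) {c : ℝ}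
    (hc : ∫ t in u..v, staticSpeed dist H L A B t < c) :
    ∀ᶠ i in l, ∫ t in u..v, staticSpeed dist H L (An i) (Bn i) t < c := by
  obtain ⟨g, hg⟩ := ACOn.exists_isSpeedBound huv hA
  obtain ⟨k, hk⟩ := hB.exists_isSpeedBound huv
  choose gn hgn using fun i => ACOn.exists_isSpeedBound huv (hAn i)
  choose kn hkn using fun i => (hBn i).exists_isSpeedBound huv
  simp_rw [← integral_staticSpeed_clampCurve huv] at hc ⊢
  refine eventually_integral_staticSpeed_lt hH hL hg hk hgn hkn
    (fun i => (hAn i).monotone_or_antitone_clampCurve huv (hdir i))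
    (fun i t ht => by rw [clampCurve_of_le _ _ ht, clampCurve_of_le _ _ le_rfl])
    (fun i t ht => by rw [clampCurve_of_ge _ _ ht, clampCurve_of_ge _ _ le_rfl]) ?_
    (fun t => hAlim _ (projIcc u v huv t).2) (fun t => hBlim _ (projIcc u v huv t).2) hc
  filter_upwards [hcone] with i hi
  filter_upwards [hi, ae_mem_Ioo_or_notMem_Icc u v] with t ht hcases
  rcases hcases with htI | htI
  · rw [mSpeed_clampCurve huv _ htI, (clampCurve_eventuallyEq huv _ htI).deriv_eq]
    exact ht htI
  · rw [mSpeed_clampCurve_of_notMem huv _ htI,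
      (clampCurve_eventuallyEq_const huv _ htI).deriv_eq, deriv_const, abs_zero, mul_zero,
      mul_zero]

end StaticSpeed

end Clamp

section GeneralizedSpeed

lemma limsup_le_const_mul_limsup {ι : Type*} {l : Filter ι} [l.NeBot] {f g : ι → ℝ} {C : ℝ}
    (hC : 0 < C) (hf : ∀ᶠ i in l, 0 ≤ f i) (hfg : ∀ᶠ i in l, f i ≤ C * g i)
    (hg : IsBoundedUnder (· ≤ ·) l g) : limsup f l ≤ C * limsup g l := by
  have hmono : Monotone (C * ·) := monotone_mul_left_of_nonneg hC.le
  have hg0 : ∀ᶠ i in l, 0 ≤ g i := by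
    filter_upwards [hf, hfg] with i h1 h2 using nonneg_of_mul_nonneg_right (h1.trans h2) hC
  calc limsup f l ≤ limsup (fun i => C * g i) l :=
        limsup_le_limsup hfg (isBoundedUnder_of_eventually_ge hf).isCoboundedUnder_le
          (hg.comp hmono)
    _ = C * limsup g l :=
        (hmono.map_limsup_of_continuousAt g (continuous_const_mul C).continuousAt hg
          (isBoundedUnder_of_eventually_ge hg0).isCoboundedUnder_le).symm

variable {u v t : ℝ}

lemma eventually_average_le_average {f g : ℝ → ℝ} (hf : IntegrableOn f (Ioo u v))
    (hg : IntegrableOn g (Ioo u v)) (hfg : ∀ᵐ t, t ∈ Ioo u v → f t ≤ g t) (ht : t ∈ Ioo u v) :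
    ∀ᶠ e in 𝓝[≠] 0, (∫ r in t..(t + e), f r) / e ≤ (∫ r in t..(t + e), g r) / e := by
  have haverage : ∀ (k : ℝ → ℝ) (e : ℝ), (∫ r in t..(t + e), k r) / e =
      (volume.real (uIoc t (t + e)))⁻¹ • ∫ r in uIoc t (t + e), k r := fun k e => by
    rw [← setAverage_eq, interval_average_eq_div, add_sub_cancel_left]
  filter_upwards [(tendsto_const_add_punctured_nhds t).eventually (Ioo_mem_nhds ht.1 ht.2)]
    with e he
  have hsub : uIoc t (t + e) ⊆ Ioo u v :=
    uIoc_subset_uIcc.trans (ordConnected_Ioo.uIcc_subset ht he)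
  rw [haverage, haverage]
  refine smul_le_smul_of_nonneg_left (setIntegral_mono_on_ae (hf.mono_set hsub)
    (hg.mono_set hsub) measurableSet_uIoc ?_) (by positivity)
  filter_upwards [hfg] with r hr hrI using hr (hsub hrI)

variable {X : Type*}

/-- For `s, s' ∈ J`, the ratio of `d s` to `d s'` at points of `K` closer than `r` is at most
`exp (ω |s - s'|)`, where `ω` is a modulus of continuity: condition (C) with all its data. -/
structure IsLogModulus (d : ℝ → X → X → ℝ) (J : Set ℝ) (K : Set X) (r : ℝ) (ω : ℝ → ℝ) :
    Prop where
  pos : 0 < r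
  map_zero : ω 0 = 0
  continuousAt : ContinuousAt ω 0
  le_mul : ∀ s ∈ J, ∀ s' ∈ J, ∀ x ∈ K, ∀ y ∈ K, d s x y < r →
    d s x y ≤ Real.exp (ω |s - s'|) * d s' x y

lemma IsLogModulus.tendsto_abs_sub {d : ℝ → X → X → ℝ} {J : Set ℝ} {K : Set X} {r : ℝ}
    {ω : ℝ → ℝ} (hω : IsLogModulus d J K r ω) (s : ℝ) :
    Tendsto (fun s' => ω |s' - s|) (𝓝 s) (𝓝 0) := by
  have habs : Tendsto (fun s' => |s' - s|) (𝓝 s) (𝓝 0) := by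
    simpa using ((continuous_id.sub continuous_const).abs : Continuous fun s' => |s' - s|).tendsto s
  exact hω.map_zero ▸ hω.continuousAt.tendsto.comp habs

variable [TopologicalSpace X] {I : Set ℝ} {d : ℝ → X → X → ℝ}

namespace IsMetricFamily

/-- The pseudometric space structure of a member of a metric family, on the given topology. -/
abbrev pseudoMetricSpace (hd : IsMetricFamily I d) {s : ℝ} (hs : s ∈ I) :
    PseudoMetricSpace X :=
  .ofDistTopology (d s) (hd s hs).1 (hd s hs).2.2.1 (hd s hs).2.2.2.1 fun U => by
    simp_rw [isOpen_iff_mem_nhds, ((hd s hs).2.2.2.2 _).mem_iff]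
    rfl

variable {β : ℝ → X} {s s' : ℝ}

lemma nonneg (hd : IsMetricFamily I d) (hs : s ∈ I) (x y : X) : 0 ≤ d s x y :=
  letI := hd.pseudoMetricSpace hs
  dist_nonneg (x := x) (y := y)

lemma mSpeed_nonneg (hd : IsMetricFamily I d) (hs : s ∈ I) (β : ℝ → X) (t : ℝ) :
    0 ≤ mSpeed (d s) β t :=
  _root_.mSpeed_nonneg (hd.nonneg hs) β t

lemma continuousOn (hd : IsMetricFamily I d) (hs : s ∈ I) (huv : u ≤ v)
    (hβ : ACOn (d s) β u v) : ContinuousOn β (Icc u v) :=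
  letI := hd.pseudoMetricSpace hs
  ACOn.continuousOn huv hβ

lemma integrableOn_mSpeed (hd : IsMetricFamily I d) (hs : s ∈ I) (huv : u ≤ v)
    (hβ : ACOn (d s) β u v) : IntegrableOn (mSpeed (d s) β) (Ioo u v) :=
  letI := hd.pseudoMetricSpace hs
  ACOn.integrableOn_mSpeed huv hβ

lemma ae_tendsto_mSpeed (hd : IsMetricFamily I d) (hs : s ∈ I) (huv : u ≤ v)
    (hβ : ACOn (d s) β u v) :
    ∀ᵐ t, t ∈ Ioo u v → Tendsto (fun e => d s (β (t + e)) (β t) / |e|) (𝓝[≠] 0)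
      (𝓝 (mSpeed (d s) β t)) :=
  letI := hd.pseudoMetricSpace hs
  ACOn.ae_tendsto_mSpeed huv hβ

lemma ae_genSpeed_eq_mSpeed (hd : IsMetricFamily I d) (hs : s ∈ I) (huv : u ≤ v)
    (hβ : ACOn (d s) β u v) : ∀ᵐ t, t ∈ Ioo u v → genSpeed d β s t = mSpeed (d s) β t := by
  filter_upwards [ae_tendsto_average_of_integrableOn (hd.integrableOn_mSpeed hs huv hβ)]
    with t ht htI
  exact (ht htI).limsup_eq

lemma ae_mSpeed_le_mul (hd : IsMetricFamily I d) (hs : s ∈ I) (hs' : s' ∈ I) (huv : u ≤ v)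
    (hβ : ACOn (d s) β u v) (hβ' : ACOn (d s') β u v) {K : Set X} (hK : MapsTo β (Icc u v) K)
    {r C : ℝ} (hr : 0 < r) (hle : ∀ x ∈ K, ∀ y ∈ K, d s x y < r → d s x y ≤ C * d s' x y) :
    ∀ᵐ t, t ∈ Ioo u v → mSpeed (d s) β t ≤ C * mSpeed (d s') β t := by
  filter_upwards [hd.ae_tendsto_mSpeed hs huv hβ, hd.ae_tendsto_mSpeed hs' huv hβ']
    with t ht ht' htI
  have hIcc : Icc u v ∈ 𝓝 t := Icc_mem_nhds htI.1 htI.2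
  have hnear : ∀ᶠ w in 𝓝 t, d s (β w) (β t) < r := by
    let _ := hd.pseudoMetricSpace hs
    exact ((ACOn.continuousOn huv hβ).continuousAt hIcc).eventually (Metric.ball_mem_nhds _ hr)
  refine le_of_tendsto_of_tendsto (ht htI) ((ht' htI).const_mul C) ?_
  filter_upwards [(tendsto_const_add_punctured_nhds t).eventually hIcc,
    (tendsto_const_add_punctured_nhds t).eventually hnear] with e he her
  rw [← mul_div_assoc]
  gcongr
  exact hle _ (hK he) _ (hK (Ioo_subset_Icc_self htI)) her

end IsMetricFamily

lemma CondC.exists_isLogModulus (hdC : CondC I d) (hd : IsMetricFamily I d) {J : Set ℝ}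
    {K : Set X} (hJI : J ⊆ I) (hJ : IsCompact J) (hK : IsCompact K) :
    ∃ r ω, IsLogModulus d J K r ω := by
  obtain ⟨r, hr, ω, hω0, -, hωc, hω⟩ := hdC J K hJI hJ hK
  refine ⟨r, ω, hr, hω0, hωc, fun s hs s' hs' x hx y hy hxy => ?_⟩
  obtain rfl | hne := eq_or_ne x y
  · rw [(hd s (hJI hs)).1, (hd s' (hJI hs')).1, mul_zero]
  have hbdd : BddBelow ((fun u => d u x y) '' J) :=
    ⟨0, forall_mem_image.2 fun w hw => hd.nonneg (hJI hw) x y⟩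
  have hlog := hω s hs s' hs' x hx y hy hne
    ((csInf_le hbdd (mem_image_of_mem _ hs)).trans_lt hxy)
  have hpos : 0 < d s x y := (hd s (hJI hs)).2.1 x y hne
  have hpos' : 0 < d s' x y := (hd s' (hJI hs')).2.1 x y hne
  exact (div_le_iff₀ hpos').1 ((Real.log_le_iff_le_exp (div_pos hpos hpos')).1
    ((le_abs_self _).trans hlog))

namespace IsLogModulus

variable {β : ℝ → X} {K : Set X} {r : ℝ} {ω : ℝ → ℝ} {s s' : ℝ}

lemma eventually_average_mSpeed_le (hω : IsLogModulus d I K r ω) (hd : IsMetricFamily I d)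
    (huv : u ≤ v) (hβ : ∀ s ∈ I, ACOn (d s) β u v) (hK : MapsTo β (Icc u v) K)
    (hs : s ∈ I) (hs' : s' ∈ I) (ht : t ∈ Ioo u v) :
    ∀ᶠ e in 𝓝[≠] 0, (∫ w in t..(t + e), mSpeed (d s) β w) / e ≤
      Real.exp (ω |s - s'|) * ((∫ w in t..(t + e), mSpeed (d s') β w) / e) := by
  simp_rw [← mul_div_assoc, ← intervalIntegral.integral_const_mul]
  exact eventually_average_le_average (hd.integrableOn_mSpeed hs huv (hβ s hs))
    ((hd.integrableOn_mSpeed hs' huv (hβ s' hs')).const_mul _)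
    (hd.ae_mSpeed_le_mul hs hs' huv (hβ s hs) (hβ s' hs') hK hω.pos
      (hω.le_mul s hs s' hs')) ht

lemma ae_genSpeed_le_mul (hω : IsLogModulus d I K r ω) (hd : IsMetricFamily I d)
    (huv : u ≤ v) (hβ : ∀ s ∈ I, ACOn (d s) β u v) (hK : MapsTo β (Icc u v) K) :
    ∀ᵐ t, t ∈ Ioo u v → ∀ s ∈ I, ∀ s' ∈ I,
      genSpeed d β s t ≤ Real.exp (ω |s - s'|) * genSpeed d β s' t := by
  obtain rfl | ⟨s₀, hs₀⟩ := I.eq_empty_or_nonempty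
  · simp
  filter_upwards [ae_tendsto_average_of_integrableOn
    (hd.integrableOn_mSpeed hs₀ huv (hβ s₀ hs₀))] with t ht htI s hs s' hs'
  have hbdd : IsBoundedUnder (· ≤ ·) (𝓝[≠] 0)
      fun e => (∫ w in t..(t + e), mSpeed (d s') β w) / e :=
    ((ht htI).const_mul _).isBoundedUnder_le.mono_le
      (hω.eventually_average_mSpeed_le hd huv hβ hK hs' hs₀ htI)
  refine limsup_le_const_mul_limsup (Real.exp_pos _) ?_
    (hω.eventually_average_mSpeed_le hd huv hβ hK hs hs' htI) hbdd
  simpa using eventually_average_le_average integrableOn_zero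
    (hd.integrableOn_mSpeed hs huv (hβ s hs))
    (.of_forall fun w _ => hd.mSpeed_nonneg hs β w) htI

lemma ae_genSpeed_nonneg (hω : IsLogModulus d I K r ω) (hd : IsMetricFamily I d)
    (huv : u ≤ v) (hβ : ∀ s ∈ I, ACOn (d s) β u v) (hK : MapsTo β (Icc u v) K) :
    ∀ᵐ t, t ∈ Ioo u v → ∀ s ∈ I, 0 ≤ genSpeed d β s t := by
  obtain rfl | ⟨s₀, hs₀⟩ := I.eq_empty_or_nonempty
  · simp
  filter_upwards [hω.ae_genSpeed_le_mul hd huv hβ hK,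
    hd.ae_genSpeed_eq_mSpeed hs₀ huv (hβ s₀ hs₀)] with t hle heq htI s hs
  have hs₀nonneg : 0 ≤ genSpeed d β s₀ t :=
    (hd.mSpeed_nonneg hs₀ β t).trans_eq (heq htI).symm
  exact nonneg_of_mul_nonneg_right (hs₀nonneg.trans (hle htI s₀ hs₀ s hs)) (Real.exp_pos _)

lemma ae_continuousOn_genSpeed (hω : IsLogModulus d I K r ω) (hd : IsMetricFamily I d)
    (huv : u ≤ v) (hβ : ∀ s ∈ I, ACOn (d s) β u v) (hK : MapsTo β (Icc u v) K) :
    ∀ᵐ t, t ∈ Ioo u v → ContinuousOn (fun s => genSpeed d β s t) I := by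
  filter_upwards [hω.ae_genSpeed_le_mul hd huv hβ hK] with t ht htI s hs
  have hmod : Tendsto (fun s' => ω |s' - s|) (𝓝[I] s) (𝓝 0) :=
    (hω.tendsto_abs_sub s).mono_left nhdsWithin_le_nhds
  have hlow : Tendsto (fun s' => Real.exp (-ω |s' - s|) * genSpeed d β s t) (𝓝[I] s)
      (𝓝 (genSpeed d β s t)) := by
    simpa using ((Real.continuous_exp.tendsto _).comp hmod.neg).mul_const (genSpeed d β s t)
  have hup : Tendsto (fun s' => Real.exp (ω |s' - s|) * genSpeed d β s t) (𝓝[I] s)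
      (𝓝 (genSpeed d β s t)) := by
    simpa using ((Real.continuous_exp.tendsto _).comp hmod).mul_const (genSpeed d β s t)
  refine tendsto_of_tendsto_of_tendsto_of_le_of_le' hlow hup ?_ ?_ <;>
    filter_upwards [self_mem_nhdsWithin] with s' hs'
  · rw [Real.exp_neg, inv_mul_le_iff₀ (Real.exp_pos _), abs_sub_comm]
    exact ht htI s hs s' hs'
  · exact ht htI s' hs' s hs

end IsLogModulus

end GeneralizedSpeed

section LorentzianLength

theorem aemeasurable_apply_of_ae_continuous {T S E : Type*} [MeasurableSpace T] {μ : Measure T}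
    [TopologicalSpace S] [TopologicalSpace.PseudoMetrizableSpace S] [SecondCountableTopology S]
    [MeasurableSpace S] [OpensMeasurableSpace S] [TopologicalSpace E]
    [TopologicalSpace.PseudoMetrizableSpace E]
    [MeasurableSpace E] [BorelSpace E] {f : S → T → E} {g : T → S}
    (hf : ∀ s, AEMeasurable (f s) μ) (hcont : ∀ᵐ t ∂μ, Continuous fun s => f s t)
    (hg : Measurable g) : AEMeasurable (fun t => f (g t) t) μ := by
  obtain _ | ⟨⟨t₀⟩⟩ := isEmpty_or_nonempty T
  · exact measurable_of_empty _ |>.aemeasurable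
  let := TopologicalSpace.pseudoMetrizableSpacePseudoMetric S
  let φ := SimpleFunc.approxOn g hg univ (g t₀) (mem_univ _)
  have hmk : ∀ᵐ t ∂μ, ∀ n, ∀ s ∈ range (φ n), f s t = (hf s).mk (f s) t :=
    ae_all_iff.2 fun n => (ae_ball_iff (φ n).finite_range.countable).2 fun s _ => (hf s).ae_eq_mk
  refine aemeasurable_of_tendsto_metrizable_ae atTop
    (f := fun n t => (hf (φ n t)).mk (f (φ n t)) t)
    (fun n => ((φ n).measurable_bind _ fun s => (hf s).measurable_mk).aemeasurable) ?_
  filter_upwards [hmk, hcont] with t hmk hcont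
  have hφ : Tendsto (fun n => φ n t) atTop (𝓝 (g t)) :=
    SimpleFunc.tendsto_approxOn hg (mem_univ _) (subset_closure (mem_univ _))
  refine ((hcont.tendsto _).comp hφ).congr fun n => ?_
  exact hmk n _ (mem_range_self t)

/-- The integrand of the Lorentzian length. -/
noncomputable def lorSpeed {X : Type*} (d : ℝ → X → X → ℝ) (h : ℝ → X → ℝ) (α : ℝ → ℝ)
    (β : ℝ → X) (t : ℝ) : ℝ :=
  √((h (α t) (β t)) ^ 2 * (deriv α t) ^ 2 - (genSpeed d β (α t) t) ^ 2)

variable {X : Type*} {I : Set ℝ} {d : ℝ → X → X → ℝ} {h : ℝ → X → ℝ} {α : ℝ → ℝ} {β : ℝ → X}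
  {a b u v : ℝ}

lemma lorSpeed_nonneg (t : ℝ) : 0 ≤ lorSpeed d h α β t := Real.sqrt_nonneg _

lemma lorSpeed_le_abs_mul (t : ℝ) :
    lorSpeed d h α β t ≤ |h (α t) (β t)| * |deriv α t| := by
  rw [lorSpeed, ← mul_pow, ← sq_abs (_ * _), abs_mul]
  exact sqrt_sq_sub_sq_le (by positivity) _

lemma lorLen_nonneg (hab : a ≤ b) : 0 ≤ lorLen d h α β a b :=
  intervalIntegral.integral_nonneg hab fun t _ => lorSpeed_nonneg t

namespace CurveIn

lemma continuousOn_fst (hγ : CurveIn I d α β a b) : ContinuousOn α (Icc a b) :=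
  ACOn.continuousOn hγ.1.le hγ.2.1

lemma restrict (hγ : CurveIn I d α β a b) (hau : a ≤ u) (huv : u < v) (hvb : v ≤ b) :
    CurveIn I d α β u v :=
  ⟨huv, hγ.2.1.mono hau hvb, fun s hs => (hγ.2.2.1 s hs).mono hau hvb,
    fun t ht => hγ.2.2.2 t (Icc_subset_Icc hau hvb ht)⟩

variable [TopologicalSpace X]

lemma continuousOn_snd (hd : IsMetricFamily I d) (hγ : CurveIn I d α β a b) :
    ContinuousOn β (Icc a b) :=
  have hI : α a ∈ I := hγ.2.2.2 a (left_mem_Icc.2 hγ.1.le)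
  hd.continuousOn hI hγ.1.le (hγ.2.2.1 _ hI)

lemma continuousOn_prodMk (hd : IsMetricFamily I d) (hγ : CurveIn I d α β a b) :
    ContinuousOn (fun t => (α t, β t)) (Icc a b) :=
  hγ.continuousOn_fst.prodMk (hγ.continuousOn_snd hd)

variable {K : Set X} {r : ℝ} {ω : ℝ → ℝ}

lemma aemeasurable_genSpeed (hd : IsMetricFamily I d) (hω : IsLogModulus d I K r ω)
    (hγ : CurveIn I d α β a b) (hK : MapsTo β (Icc a b) K) :
    AEMeasurable (fun t => genSpeed d β (α t) t) (volume.restrict (Ioo a b)) := by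
  obtain ⟨hab, hα, hβ, hαI⟩ := hγ
  obtain ⟨g, hg⟩ := ACOn.exists_isSpeedBound hab.le hα
  let αI : ℝ → I := fun t =>
    ⟨clampCurve hab.le α t, hαI _ (projIcc a b hab.le t).2⟩
  have hαI_meas : Measurable αI := hg.continuous.measurable.subtype_mk
  have hmeas : ∀ s : I, AEMeasurable (genSpeed d β s) (volume.restrict (Ioo a b)) := fun s => by
    refine (hd.integrableOn_mSpeed s.2 hab.le (hβ s s.2)).aemeasurable.congr ?_
    filter_upwards [ae_restrict_of_ae (hd.ae_genSpeed_eq_mSpeed s.2 hab.le (hβ s s.2)),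
      ae_restrict_mem measurableSet_Ioo] with t ht htI using (ht htI).symm
  have hcont : ∀ᵐ t ∂volume.restrict (Ioo a b), Continuous fun s : I => genSpeed d β s t := by
    filter_upwards [ae_restrict_of_ae (hω.ae_continuousOn_genSpeed hd hab.le hβ hK),
      ae_restrict_mem measurableSet_Ioo] with t ht htI
    exact continuousOn_iff_continuous_domRestrict.1 (ht htI)
  refine (aemeasurable_apply_of_ae_continuous hmeas hcont hαI_meas).congr ?_
  filter_upwards [ae_restrict_mem measurableSet_Ioo] with t ht
  rw [show (αI t : ℝ) = α t from clampCurve_of_mem hab.le α (Ioo_subset_Icc_self ht)]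

lemma integrableOn_lorSpeed (hd : IsMetricFamily I d) (hω : IsLogModulus d I K r ω)
    (hcont : ContinuousOn (fun z : ℝ × X => h z.1 z.2) (I ×ˢ univ))
    (hγ : CurveIn I d α β a b) (hK : MapsTo β (Icc a b) K) :
    IntegrableOn (lorSpeed d h α β) (Ioo a b) := by
  have hcomp : ContinuousOn (fun t => h (α t) (β t)) (Icc a b) :=
    hcont.comp (hγ.continuousOn_prodMk hd) fun t ht => ⟨hγ.2.2.2 t ht, mem_univ _⟩
  have hmeas : AEMeasurable (fun t => h (α t) (β t)) (volume.restrict (Ioo a b)) :=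
    (hcomp.mono Ioo_subset_Icc_self).aemeasurable measurableSet_Ioo
  obtain ⟨C, hC⟩ := isCompact_Icc.exists_bound_of_continuousOn hcomp
  refine ((ACOn.integrableOn_deriv hγ.1.le hγ.2.1).abs.const_mul C).mono' ?_ ?_
  · exact (((hmeas.pow_const 2).mul ((measurable_deriv α).pow_const 2).aemeasurable).sub
      ((hγ.aemeasurable_genSpeed hd hω hK).pow_const 2)).sqrt.aestronglyMeasurable
  · filter_upwards [ae_restrict_mem measurableSet_Ioo] with t ht
    rw [Real.norm_of_nonneg (lorSpeed_nonneg t)]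
    exact (lorSpeed_le_abs_mul t).trans
      (mul_le_mul_of_nonneg_right (hC t (Ioo_subset_Icc_self ht)) (abs_nonneg _))

end CurveIn

end LorentzianLength

section Freezing

lemma sqrt_mul_sq_sub_sq_le {H l h m p v : ℝ} (hl : 0 ≤ l) (hm : 0 ≤ m) (hmv : l * m ≤ v)
    (hH : |h| ≤ H) : √(h ^ 2 * p ^ 2 - v ^ 2) ≤ √((H * |p|) ^ 2 - (l * m) ^ 2) := by
  rw [mul_pow H, sq_abs p, ← sq_abs h]
  gcongr

lemma sqrt_sq_sub_sq_le_add {H l h h₁ κ m p v : ℝ} (hl : 0 ≤ l) (hl1 : l ≤ 1) (hv : 0 ≤ v)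
    (hvm : l * v ≤ m) (hh₁ : 0 ≤ h₁) (hh : h₁ ≤ |h|) (hκ : 0 ≤ κ)
    (hH : H ^ 2 - l ^ 4 * h₁ ^ 2 ≤ κ ^ 2) :
    √((H * |p|) ^ 2 - (l * m) ^ 2) ≤ √(h ^ 2 * p ^ 2 - v ^ 2) + κ * |p| := by
  refine Real.sqrt_le_iff.2 ⟨by positivity, ?_⟩
  have hspeed : l ^ 4 * v ^ 2 ≤ (l * m) ^ 2 :=
    calc l ^ 4 * v ^ 2 = (l * (l * v)) ^ 2 := by ring
      _ ≤ (l * m) ^ 2 := by gcongr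
  have hdefect : (H * |p|) ^ 2 ≤ l ^ 4 * (h ^ 2 * p ^ 2) + (κ * |p|) ^ 2 := by
    have hle : H ^ 2 ≤ l ^ 4 * |h| ^ 2 + κ ^ 2 := by
      have : l ^ 4 * h₁ ^ 2 ≤ l ^ 4 * |h| ^ 2 := by gcongr
      linarith
    calc (H * |p|) ^ 2 = H ^ 2 * |p| ^ 2 := mul_pow _ _ _
      _ ≤ (l ^ 4 * |h| ^ 2 + κ ^ 2) * |p| ^ 2 := by gcongr
      _ = l ^ 4 * (h ^ 2 * p ^ 2) + (κ * |p|) ^ 2 := by rw [← sq_abs h, ← sq_abs p]; ring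
  have hcontract : l ^ 4 * (h ^ 2 * p ^ 2 - v ^ 2) ≤ √(h ^ 2 * p ^ 2 - v ^ 2) ^ 2 := by
    rcases le_total 0 (h ^ 2 * p ^ 2 - v ^ 2) with h0 | h0
    · rw [Real.sq_sqrt h0]
      exact mul_le_of_le_one_left h0 (pow_le_one₀ hl hl1)
    · exact (mul_nonpos_of_nonneg_of_nonpos (by positivity) h0).trans (sq_nonneg _)
  have hcross : 0 ≤ √(h ^ 2 * p ^ 2 - v ^ 2) * (κ * |p|) := by positivity
  linarith

lemma exists_freezing_defect_le (h₀ : ℝ) {κ : ℝ} (hκ : 0 < κ) :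
    ∃ η > 0, (|h₀| + η) ^ 2 - Real.exp (-η) ^ 4 * max (|h₀| - η) 0 ^ 2 ≤ κ ^ 2 := by
  have hcont : Continuous fun η : ℝ =>
      (|h₀| + η) ^ 2 - Real.exp (-η) ^ 4 * max (|h₀| - η) 0 ^ 2 := by
    fun_prop
  have hlim := hcont.tendsto 0
  simp only [add_zero, neg_zero, Real.exp_zero, one_pow, sub_zero, one_mul,
    max_eq_left (abs_nonneg h₀), sub_self] at hlim
  have hev : ∀ᶠ η : ℝ in 𝓝[>] 0,
      (|h₀| + η) ^ 2 - Real.exp (-η) ^ 4 * max (|h₀| - η) 0 ^ 2 ≤ κ ^ 2 :=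
    (hlim.eventually_le_const (pow_pos hκ 2)).filter_mono nhdsWithin_le_nhds
  obtain ⟨η, hη, hpos⟩ := (hev.and self_mem_nhdsWithin).exists
  exact ⟨η, hpos, hη⟩

variable {X : Type*} {I : Set ℝ} {d : ℝ → X → X → ℝ} {h : ℝ → X → ℝ} {α : ℝ → ℝ} {β : ℝ → X}
  {a b u v : ℝ}

lemma CausalCurve.restrict (hγ : CausalCurve I d h α β a b) (hau : a ≤ u) (huv : u < v)
    (hvb : v ≤ b) : CausalCurve I d h α β u v := by
  have hsub : ∀ t ∈ Ioo u v, t ∈ Ioo a b := fun t ht => Ioo_subset_Ioo hau hvb ht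
  exact ⟨hγ.1.restrict hau huv hvb,
    hγ.2.1.imp (fun hα => hα.mono fun t ht htI => ht (hsub t htI))
      (fun hα => hα.mono fun t ht htI => ht (hsub t htI)),
    hγ.2.2.mono fun t ht htI => ht (hsub t htI)⟩

/-- The events at which the metrics, up to the factor `exp (±η)`, and the warping function, up to
`η`, are those of the event `p`, for metrics with modulus `ω`. -/
def almostStaticSet (ω : ℝ → ℝ) (h : ℝ → X → ℝ) (p : ℝ × X) (η : ℝ) : Set (ℝ × X) :=
  {z | ω |z.1 - p.1| ≤ η ∧ |h z.1 z.2 - h p.1 p.2| ≤ η}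

variable {K : Set X} {r η κ : ℝ} {ω : ℝ → ℝ} {p : ℝ × X}

lemma abs_le_of_mem_almostStaticSet {z : ℝ × X} (hz : z ∈ almostStaticSet ω h p η) :
    |h z.1 z.2| ≤ |h p.1 p.2| + η := by
  linarith [abs_sub_abs_le_abs_sub (h z.1 z.2) (h p.1 p.2), hz.2]

variable [TopologicalSpace X]

lemma IsLogModulus.almostStaticSet_mem_nhdsWithin (hω : IsLogModulus d I K r ω)
    (hcont : ContinuousOn (fun z : ℝ × X => h z.1 z.2) (I ×ˢ univ)) (hp : p.1 ∈ I)
    (hη : 0 < η) : almostStaticSet ω h p η ∈ 𝓝[I ×ˢ univ] p := by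
  have hfst : Tendsto (fun z : ℝ × X => ω |z.1 - p.1|) (𝓝[I ×ˢ univ] p) (𝓝 0) :=
    (hω.tendsto_abs_sub p.1).comp (continuous_fst.continuousAt.mono_left nhdsWithin_le_nhds)
  have hwarp : Tendsto (fun z : ℝ × X => |h z.1 z.2 - h p.1 p.2|) (𝓝[I ×ˢ univ] p) (𝓝 0) := by
    simpa using ((hcont p ⟨hp, mem_univ _⟩).sub_const (h p.1 p.2)).abs
  exact (hfst.eventually_le_const hη).and (hwarp.eventually_le_const hη)

lemma CurveIn.ae_exp_mul_speed_le (hd : IsMetricFamily I d) (hω : IsLogModulus d I K r ω)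
    (hp : p.1 ∈ I) (hγ : CurveIn I d α β u v) (hK : MapsTo β (Icc u v) K)
    (hnear : ∀ t ∈ Icc u v, (α t, β t) ∈ almostStaticSet ω h p η) :
    ∀ᵐ t, t ∈ Ioo u v → Real.exp (-η) * mSpeed (d p.1) β t ≤ genSpeed d β (α t) t ∧
      Real.exp (-η) * genSpeed d β (α t) t ≤ mSpeed (d p.1) β t := by
  filter_upwards [hω.ae_genSpeed_le_mul hd hγ.1.le hγ.2.2.1 hK,
    hω.ae_genSpeed_nonneg hd hγ.1.le hγ.2.2.1 hK,
    hd.ae_genSpeed_eq_mSpeed hp hγ.1.le (hγ.2.2.1 _ hp)] with t hle hnonneg heq htI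
  have ht : t ∈ Icc u v := Ioo_subset_Icc_self htI
  have hαt : α t ∈ I := hγ.2.2.2 t ht
  have hbound : ∀ s ∈ I, ∀ s' ∈ I, ω |s - s'| ≤ η →
      Real.exp (-η) * genSpeed d β s t ≤ genSpeed d β s' t := fun s hs s' hs' hη => by
    rw [Real.exp_neg, inv_mul_le_iff₀ (Real.exp_pos _)]
    refine (hle htI s hs s' hs').trans ?_
    gcongr
    exact hnonneg htI s' hs'
  rw [← heq htI]
  exact ⟨hbound _ hp _ hαt (abs_sub_comm p.1 _ ▸ (hnear t ht).1), hbound _ hαt _ hp (hnear t ht).1⟩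

lemma CurveIn.ae_lorSpeed_le_staticSpeed (hd : IsMetricFamily I d)
    (hω : IsLogModulus d I K r ω) (hp : p.1 ∈ I) (hγ : CurveIn I d α β u v)
    (hK : MapsTo β (Icc u v) K)
    (hnear : ∀ t ∈ Icc u v, (α t, β t) ∈ almostStaticSet ω h p η) :
    ∀ᵐ t, t ∈ Ioo u v → lorSpeed d h α β t ≤
      staticSpeed (d p.1) (|h p.1 p.2| + η) (Real.exp (-η)) α β t := by
  filter_upwards [hγ.ae_exp_mul_speed_le hd hω hp hK hnear] with t ht htI
  exact sqrt_mul_sq_sub_sq_le (Real.exp_pos _).le (hd.mSpeed_nonneg hp β t) (ht htI).1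
    (abs_le_of_mem_almostStaticSet (hnear t (Ioo_subset_Icc_self htI)))

lemma CurveIn.ae_staticSpeed_le_lorSpeed_add (hd : IsMetricFamily I d)
    (hω : IsLogModulus d I K r ω) (hp : p.1 ∈ I) (hγ : CurveIn I d α β u v)
    (hK : MapsTo β (Icc u v) K)
    (hnear : ∀ t ∈ Icc u v, (α t, β t) ∈ almostStaticSet ω h p η) (hη : 0 ≤ η) (hκ : 0 ≤ κ)
    (hdefect : (|h p.1 p.2| + η) ^ 2 - Real.exp (-η) ^ 4 * max (|h p.1 p.2| - η) 0 ^ 2 ≤ κ ^ 2) :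
    ∀ᵐ t, t ∈ Ioo u v → staticSpeed (d p.1) (|h p.1 p.2| + η) (Real.exp (-η)) α β t ≤
      lorSpeed d h α β t + κ * |deriv α t| := by
  filter_upwards [hγ.ae_exp_mul_speed_le hd hω hp hK hnear,
    hω.ae_genSpeed_nonneg hd hγ.1.le hγ.2.2.1 hK] with t ht hnonneg htI
  have htIcc : t ∈ Icc u v := Ioo_subset_Icc_self htI
  refine sqrt_sq_sub_sq_le_add (Real.exp_pos _).le (Real.exp_le_one_iff.2 (neg_nonpos.2 hη))
    (hnonneg htI _ (hγ.2.2.2 t htIcc)) (ht htI).2 (le_max_right _ _)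
    (max_le ?_ (abs_nonneg _)) hκ hdefect
  linarith [abs_sub_abs_le_abs_sub (h p.1 p.2) (h (α t) (β t)),
    abs_sub_comm (h p.1 p.2) (h (α t) (β t)), (hnear t htIcc).2]

lemma CausalCurve.ae_exp_mul_mSpeed_le (hd : IsMetricFamily I d)
    (hω : IsLogModulus d I K r ω) (hp : p.1 ∈ I) (hγ : CausalCurve I d h α β u v)
    (hK : MapsTo β (Icc u v) K)
    (hnear : ∀ t ∈ Icc u v, (α t, β t) ∈ almostStaticSet ω h p η) :
    ∀ᵐ t, t ∈ Ioo u v →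
      Real.exp (-η) * mSpeed (d p.1) β t ≤ (|h p.1 p.2| + η) * |deriv α t| := by
  filter_upwards [hγ.1.ae_exp_mul_speed_le hd hω hp hK hnear, hγ.2.2] with t ht hcausal htI
  calc Real.exp (-η) * mSpeed (d p.1) β t ≤ genSpeed d β (α t) t := (ht htI).1
    _ ≤ |h (α t) (β t) * deriv α t| := by
        refine (le_abs_self _).trans (sq_le_sq.1 ?_)
        rw [mul_pow]
        exact hcausal htI
    _ = |h (α t) (β t)| * |deriv α t| := abs_mul _ _
    _ ≤ (|h p.1 p.2| + η) * |deriv α t| := by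
        gcongr
        exact abs_le_of_mem_almostStaticSet (hnear t (Ioo_subset_Icc_self htI))

theorem eventually_lorLen_le_of_almostStatic (hd : IsMetricFamily I d)
    (hω : IsLogModulus d I K r ω)
    (hcont : ContinuousOn (fun z : ℝ × X => h z.1 z.2) (I ×ˢ univ)) (hp : p.1 ∈ I) (hη : 0 ≤ η)
    (hκ : 0 ≤ κ)
    (hdefect : (|h p.1 p.2| + η) ^ 2 - Real.exp (-η) ^ 4 * max (|h p.1 p.2| - η) 0 ^ 2 ≤ κ ^ 2)
    {ι : Type*} {l : Filter ι} [l.IsCountablyGenerated] {αn : ι → ℝ → ℝ} {βn : ι → ℝ → X}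
    (hγn : ∀ i, CausalCurve I d h (αn i) (βn i) u v) (hKn : ∀ i, MapsTo (βn i) (Icc u v) K)
    (hnearn : ∀ᶠ i in l, ∀ t ∈ Icc u v, (αn i t, βn i t) ∈ almostStaticSet ω h p η)
    (hγ : CurveIn I d α β u v) (hK : MapsTo β (Icc u v) K)
    (hnear : ∀ t ∈ Icc u v, (α t, β t) ∈ almostStaticSet ω h p η)
    (hlim : ∀ t ∈ Icc u v, Tendsto (fun i => (αn i t, βn i t)) l (𝓝 (α t, β t)))
    {ε : ℝ} (hε : 0 < ε) :
    ∀ᶠ i in l, lorLen d h (αn i) (βn i) u v ≤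
      lorLen d h α β u v + κ * (∫ t in u..v, |deriv α t|) + ε := by
  have huv : u ≤ v := hγ.1.le
  have hH : 0 ≤ |h p.1 p.2| + η := by positivity
  let _ := hd.pseudoMetricSpace hp
  have hderiv : IntegrableOn (fun t => |deriv α t|) (Ioo u v) :=
    (ACOn.integrableOn_deriv huv hγ.2.1).abs
  have hspeed : IntegrableOn (lorSpeed d h α β) (Ioo u v) :=
    hγ.integrableOn_lorSpeed hd hω hcont hK
  have hlimit : ∫ t in u..v, staticSpeed dist (|h p.1 p.2| + η) (Real.exp (-η)) α β t ≤
      lorLen d h α β u v + κ * ∫ t in u..v, |deriv α t| := by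
    refine (integral_le_integral_of_ae_Ioo huv
      (integrableOn_staticSpeed huv hH hγ.2.1 (hγ.2.2.1 _ hp)) (hspeed.add (hderiv.const_mul κ))
      (hγ.ae_staticSpeed_le_lorSpeed_add hd hω hp hK hnear hη hκ hdefect)).trans_eq ?_
    rw [← intervalIntegral.integral_const_mul]
    exact intervalIntegral.integral_add
      ((intervalIntegrable_iff_integrableOn_Ioo_of_le huv).2 hspeed)
      ((intervalIntegrable_iff_integrableOn_Ioo_of_le huv).2 (hderiv.const_mul κ))
  filter_upwards [hnearn, eventually_intervalIntegral_staticSpeed_lt huv hH (Real.exp_pos (-η)).le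
    hγ.2.1 (hγ.2.2.1 _ hp) (fun i => (hγn i).1.2.1) (fun i => (hγn i).1.2.2.1 _ hp)
    (fun i => (hγn i).2.1)
    (hnearn.mono fun i hi => (hγn i).ae_exp_mul_mSpeed_le hd hω hp (hKn i) hi)
    (fun t ht => (continuous_fst.tendsto _).comp (hlim t ht))
    (fun t ht => (continuous_snd.tendsto _).comp (hlim t ht))
    (hlimit.trans_lt (lt_add_of_pos_right _ hε))] with i hi hlt
  exact (integral_le_integral_of_ae_Ioo huv
    ((hγn i).1.integrableOn_lorSpeed hd hω hcont (hKn i))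
    (integrableOn_staticSpeed huv hH (hγn i).1.2.1 ((hγn i).1.2.2.1 _ hp))
    ((hγn i).1.ae_lorSpeed_le_staticSpeed hd hω hp (hKn i) hi)).trans hlt.le

end Freezing

section Globalization

theorem isCompact_union_iUnion_of_tendsto_smallSets {S ι : Type*} [TopologicalSpace S]
    {K₀ : Set S} {K : ι → Set S} (hK₀ : IsCompact K₀) (hK : ∀ i, IsCompact (K i))
    (hlim : Tendsto K cofinite (𝓝ˢ K₀).smallSets) : IsCompact (K₀ ∪ ⋃ i, K i) := by
  refine isCompact_of_finite_subcover fun U hU hcover => ?_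
  obtain ⟨t, ht⟩ := hK₀.elim_finite_subcover U hU (subset_union_left.trans hcover)
  have htU : ⋃ j ∈ t, U j ∈ 𝓝ˢ K₀ := (isOpen_biUnion fun j _ => hU j).mem_nhdsSet.2 ht
  have hfin : {i | ¬ K i ⊆ ⋃ j ∈ t, U j}.Finite := tendsto_smallSets_iff.1 hlim _ htU
  obtain ⟨t', ht'⟩ := (hfin.isCompact_biUnion fun i _ => hK i).elim_finite_subcover U hU
    ((iUnion₂_subset fun i _ => subset_iUnion K i).trans (subset_union_right.trans hcover))
  classical
  refine ⟨t ∪ t', union_subset ?_ (iUnion_subset fun i => ?_)⟩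
  · exact ht.trans (biUnion_subset_biUnion_left fun j hj => Finset.mem_union_left _ hj)
  · by_cases hi : K i ⊆ ⋃ j ∈ t, U j
    · exact hi.trans (biUnion_subset_biUnion_left fun j hj => Finset.mem_union_left _ hj)
    · exact (subset_biUnion_of_mem (u := K) hi).trans (ht'.trans
        (biUnion_subset_biUnion_left fun j hj => Finset.mem_union_right _ hj))

theorem tendsto_image_smallSets_nhdsSet {T S ι : Type*} [TopologicalSpace T]
    [TopologicalSpace S] {s : Set T} (hs : IsCompact s) {l : Filter ι} {f : ι → T → S}
    {f₀ : T → S}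
    (hf : ∀ t ∈ s, Tendsto (fun p : ι × T => f p.1 p.2) (l ×ˢ 𝓝[s] t) (𝓝 (f₀ t))) :
    Tendsto (fun i => f i '' s) l (𝓝ˢ (f₀ '' s)).smallSets := by
  refine tendsto_smallSets_iff.2 fun U hU => ?_
  have hloc : ∀ t ∈ s, {p : ι × T | p.2 ∈ s → f p.1 p.2 ∈ U} ∈ l ×ˢ 𝓝 t := fun t ht => by
    have hUt := hf t ht (mem_nhdsSet_iff_forall.1 hU _ (mem_image_of_mem f₀ ht))
    obtain ⟨A, hA, B, hB, hAB⟩ := mem_prod_iff.1 hUt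
    exact mem_prod_iff.2 ⟨A, hA, _, mem_nhdsWithin_iff_eventually.1 hB,
      fun p hp hps => hAB ⟨hp.1, hp.2 hps⟩⟩
  obtain ⟨A, hA, B, hB, hAB⟩ := mem_prod_iff.1 (hs.mem_prod_nhdsSet_of_forall hloc)
  filter_upwards [hA] with i hi
  exact image_subset_iff.2 fun t ht => hAB (mk_mem_prod hi (subset_of_mem_nhdsSet hB ht)) ht

theorem Icc_induction_of_local {a b : ℝ} (hab : a ≤ b) {P : ℝ → ℝ → Prop}
    (htrans : ∀ u v w, a ≤ u → u ≤ v → v ≤ w → w ≤ b → P u v → P v w → P u w)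
    (hloc : ∀ t ∈ Icc a b, ∃ U ∈ 𝓝[Icc a b] t, ∀ u v, u ≤ v → Icc u v ⊆ U → P u v) :
    P a b := by
  choose! U hU hP using hloc
  obtain ⟨t, ht0, hmono, ⟨N, hN⟩, ht⟩ := exists_monotone_Icc_subset_open_cover_Icc hab
    (c := fun i : Icc a b => interior (Subtype.val ⁻¹' U i : Set (Icc a b)))
    (fun i => isOpen_interior) (fun s _ => mem_iUnion.2 ⟨s, mem_interior_iff_mem_nhds.2
      (preimage_coe_mem_nhds_subtype.2 (hU s s.2))⟩)
  have hstep : ∀ k, P (t k) (t (k + 1)) := fun k => by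
    obtain ⟨i, hi⟩ := ht k
    refine hP i i.2 _ _ (hmono k.le_succ) fun r hr => ?_
    let r' : Icc a b := ⟨r, (t k).2.1.trans hr.1, hr.2.trans (t (k + 1)).2.2⟩
    have hr' : r' ∈ Icc (t k) (t (k + 1)) := hr
    exact interior_subset (s := Subtype.val ⁻¹' U i) (hi hr')
  have hchain : ∀ k, P a (t (k + 1)) := fun k => by
    induction k with
    | zero => simpa only [ht0] using hstep 0
    | succ k ih =>
      exact htrans _ _ _ le_rfl (t (k + 1)).2.1 (hmono (k + 1).le_succ) (t (k + 1 + 1)).2.2 ih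
        (hstep (k + 1))
  simpa only [hN (N + 1) N.le_succ] using hchain N

variable {X : Type*} [TopologicalSpace X] {I : Set ℝ} {d : ℝ → X → X → ℝ} {h : ℝ → X → ℝ}
  {α : ℝ → ℝ} {β : ℝ → X} {a b u v w : ℝ} {K : Set X} {r : ℝ} {ω : ℝ → ℝ}

lemma intervalIntegrable_of_integrableOn_Ioo {f : ℝ → ℝ} (hf : IntegrableOn f (Ioo a b))
    (hau : a ≤ u) (huv : u ≤ v) (hvb : v ≤ b) : IntervalIntegrable f volume u v :=
  (intervalIntegrable_iff_integrableOn_Ioo_of_le huv).2 (hf.mono_set (Ioo_subset_Ioo hau hvb))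

lemma CurveIn.lorLen_add_adjacent (hd : IsMetricFamily I d) (hω : IsLogModulus d I K r ω)
    (hcont : ContinuousOn (fun z : ℝ × X => h z.1 z.2) (I ×ˢ univ))
    (hγ : CurveIn I d α β a b) (hK : MapsTo β (Icc a b) K)
    (hau : a ≤ u) (huv : u ≤ v) (hvw : v ≤ w) (hwb : w ≤ b) :
    lorLen d h α β u v + lorLen d h α β v w = lorLen d h α β u w := by
  have hint : IntegrableOn (lorSpeed d h α β) (Ioo a b) :=
    hγ.integrableOn_lorSpeed hd hω hcont hK
  exact intervalIntegral.integral_add_adjacent_intervals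
    (intervalIntegrable_of_integrableOn_Ioo hint hau huv (hvw.trans hwb))
    (intervalIntegrable_of_integrableOn_Ioo hint (hau.trans huv) hvw hwb)

section Limit

variable {ι : Type*} {l : Filter ι} {αn : ι → ℝ → ℝ} {βn : ι → ℝ → X} {κ : ℝ}

lemma exists_nhdsWithin_eventually_lorLen_le [l.IsCountablyGenerated] (hd : IsMetricFamily I d)
    (hω : IsLogModulus d I K r ω)
    (hcont : ContinuousOn (fun z : ℝ × X => h z.1 z.2) (I ×ˢ univ))
    (hγn : ∀ i, CausalCurve I d h (αn i) (βn i) a b) (hKn : ∀ i, MapsTo (βn i) (Icc a b) K)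
    (hγ : CurveIn I d α β a b) (hK : MapsTo β (Icc a b) K)
    (hlim : ∀ t ∈ Icc a b, Tendsto (fun p : ι × ℝ => (αn p.1 p.2, βn p.1 p.2))
      (l ×ˢ 𝓝[Icc a b] t) (𝓝 (α t, β t)))
    (hκ : 0 < κ) {t : ℝ} (ht : t ∈ Icc a b) :
    ∃ U ∈ 𝓝[Icc a b] t, ∀ u v, u < v → Icc u v ⊆ U → ∀ ε > 0,
      ∀ᶠ i in l, lorLen d h (αn i) (βn i) u v ≤
        lorLen d h α β u v + κ * (∫ s in u..v, |deriv α s|) + ε := by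
  obtain ⟨η, hη, hdefect⟩ := exists_freezing_defect_le (h (α t) (β t)) hκ
  have hαt : α t ∈ I := hγ.2.2.2 t ht
  have hstatic : almostStaticSet ω h (α t, β t) η ∈ 𝓝[I ×ˢ univ] (α t, β t) :=
    hω.almostStaticSet_mem_nhdsWithin hcont hαt hη
  have hin : ∀ᶠ p : ι × ℝ in l ×ˢ 𝓝[Icc a b] t,
      (αn p.1 p.2, βn p.1 p.2) ∈ I ×ˢ (univ : Set X) := by
    filter_upwards [tendsto_snd.eventually self_mem_nhdsWithin] with p hp
    exact ⟨(hγn p.1).1.2.2.2 p.2 hp, mem_univ _⟩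
  obtain ⟨A, hA, B, hB, hAB⟩ :=
    mem_prod_iff.1 (tendsto_nhdsWithin_iff.2 ⟨hlim t ht, hin⟩ hstatic)
  have hlimit : ∀ᶠ s in 𝓝[Icc a b] t, (α s, β s) ∈ almostStaticSet ω h (α t, β t) η :=
    ((hγ.continuousOn_prodMk hd t ht).tendsto_nhdsWithin fun s hs =>
      mk_mem_prod (hγ.2.2.2 s hs) (mem_univ _)).eventually hstatic
  refine ⟨_, inter_mem (inter_mem hB hlimit) self_mem_nhdsWithin, fun u v huv hU ε hε => ?_⟩
  have hsub : Icc u v ⊆ Icc a b := fun s hs => (hU hs).2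
  have hau : a ≤ u := (hsub (left_mem_Icc.2 huv.le)).1
  have hvb : v ≤ b := (hsub (right_mem_Icc.2 huv.le)).2
  have hpointwise : ∀ s ∈ Icc u v, Tendsto (fun i => (αn i s, βn i s)) l (𝓝 (α s, β s)) :=
    fun s hs => (hlim s (hsub hs)).comp (tendsto_id.prodMk
      (tendsto_const_pure.mono_right (pure_le_nhdsWithin (hsub hs))))
  exact eventually_lorLen_le_of_almostStatic hd hω hcont hαt hη.le hκ.le hdefect
    (fun i => (hγn i).restrict hau huv hvb) (fun i => (hKn i).mono_left hsub)
    (mem_of_superset hA fun i hi s hs => hAB (mk_mem_prod hi (hU hs).1.1))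
    (hγ.restrict hau huv hvb) (hK.mono_left hsub) (fun s hs => (hU hs).1.2) hpointwise hε

theorem eventually_lorLen_le [l.IsCountablyGenerated] (hd : IsMetricFamily I d)
    (hω : IsLogModulus d I K r ω)
    (hcont : ContinuousOn (fun z : ℝ × X => h z.1 z.2) (I ×ˢ univ))
    (hγn : ∀ i, CausalCurve I d h (αn i) (βn i) a b) (hKn : ∀ i, MapsTo (βn i) (Icc a b) K)
    (hγ : CurveIn I d α β a b) (hK : MapsTo β (Icc a b) K)
    (hlim : ∀ t ∈ Icc a b, Tendsto (fun p : ι × ℝ => (αn p.1 p.2, βn p.1 p.2))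
      (l ×ˢ 𝓝[Icc a b] t) (𝓝 (α t, β t)))
    (hκ : 0 < κ) {ε : ℝ} (hε : 0 < ε) :
    ∀ᶠ i in l, lorLen d h (αn i) (βn i) a b ≤
      lorLen d h α β a b + κ * (∫ t in a..b, |deriv α t|) + ε := by
  have hab : a ≤ b := hγ.1.le
  have hderiv : IntegrableOn (fun t => |deriv α t|) (Ioo a b) :=
    (ACOn.integrableOn_deriv hab hγ.2.1).abs
  refine Icc_induction_of_local hab (P := fun u v => ∀ ε > 0, ∀ᶠ i in l,
    lorLen d h (αn i) (βn i) u v ≤ lorLen d h α β u v + κ * (∫ t in u..v, |deriv α t|) + ε)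
    ?_ ?_ ε hε
  · intro u v w hau huv hvw hwb hPuv hPvw ε hε
    filter_upwards [hPuv _ (half_pos hε), hPvw _ (half_pos hε)] with i hi hi'
    rw [← (hγn i).1.lorLen_add_adjacent hd hω hcont (hKn i) hau huv hvw hwb,
      ← hγ.lorLen_add_adjacent hd hω hcont hK hau huv hvw hwb,
      ← intervalIntegral.integral_add_adjacent_intervals
        (intervalIntegrable_of_integrableOn_Ioo hderiv hau huv (hvw.trans hwb))
        (intervalIntegrable_of_integrableOn_Ioo hderiv (hau.trans huv) hvw hwb)]
    linarith
  · intro t ht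
    obtain ⟨U, hU, hlocal⟩ := exists_nhdsWithin_eventually_lorLen_le hd hω hcont hγn hKn hγ hK
      hlim hκ ht
    refine ⟨U, hU, fun u v huv hsub ε hε => ?_⟩
    obtain rfl | hlt := huv.eq_or_lt
    · simp [lorLen, hε.le]
    · exact hlocal u v hlt hsub ε hε

end Limit

end Globalization

section UniformLimits

theorem limsup_le_of_forall_eventually_le_add_mul {ι : Type*} {l : Filter ι} [l.NeBot] {u : ι → ℝ}
    {L C : ℝ} (hu : IsBoundedUnder (· ≥ ·) l u)
    (h : ∀ κ > 0, ∀ ε > 0, ∀ᶠ i in l, u i ≤ L + κ * C + ε) : limsup u l ≤ L := by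
  refine le_of_forall_pos_le_add fun ε hε => limsup_le_of_le hu.isCoboundedUnder_le ?_
  have hκC : ε / 2 / (|C| + 1) * C ≤ ε / 2 := by
    rw [div_mul_eq_mul_div, div_le_iff₀ (by positivity)]
    exact mul_le_mul_of_nonneg_left ((le_abs_self C).trans (le_add_of_nonneg_right zero_le_one))
      (half_pos hε).le
  filter_upwards [h (ε / 2 / (|C| + 1)) (by positivity) (ε / 2) (half_pos hε)] with i hi
  linarith

variable {X : Type*} {I J : Set ℝ} {d : ℝ → X → X → ℝ} {h : ℝ → X → ℝ} {α : ℝ → ℝ} {β : ℝ → X}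
  {a b : ℝ}

lemma CurveIn.of_mapsTo (hγ : CurveIn I d α β a b) (hJI : J ⊆ I) (hα : MapsTo α (Icc a b) J) :
    CurveIn J d α β a b :=
  ⟨hγ.1, hγ.2.1, fun s hs => hγ.2.2.1 s (hJI hs), hα⟩

variable [TopologicalSpace X]

lemma IsCompatibleProdMetric.tendsto_of_uniform {D : ℝ × X → ℝ × X → ℝ}
    (hD : IsCompatibleProdMetric D) {T ι : Type*} [TopologicalSpace T] {l : Filter ι} {s : Set T}
    {γ : ι → T → ℝ × X} {γ₀ : T → ℝ × X} (hγ₀ : ContinuousOn γ₀ s)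
    (hunif : ∀ ε > (0 : ℝ), ∀ᶠ i in l, ∀ t ∈ s, D (γ i t) (γ₀ t) < ε) {t : T} (ht : t ∈ s) :
    Tendsto (fun p : ι × T => γ p.1 p.2) (l ×ˢ 𝓝[s] t) (𝓝 (γ₀ t)) := by
  obtain ⟨-, -, hsymm, htriangle, hbasis⟩ := hD
  refine (hbasis _).tendsto_right_iff.2 fun ε hε => ?_
  have hnear : ∀ᶠ r in 𝓝[s] t, D (γ₀ t) (γ₀ r) < ε / 2 ∧ r ∈ s :=
    ((hγ₀ t ht).eventually ((hbasis _).mem_of_mem (half_pos hε))).and self_mem_nhdsWithin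
  filter_upwards [(hunif _ (half_pos hε)).prod_mk hnear] with p ⟨hclose, hlimit, hps⟩
  calc D (γ₀ t) (γ p.1 p.2) ≤ D (γ₀ t) (γ₀ p.2) + D (γ₀ p.2) (γ p.1 p.2) := htriangle _ _ _
    _ < ε / 2 + ε / 2 := add_lt_add hlimit (hsymm _ _ ▸ hclose p.2 hps)
    _ = ε := add_halves ε

variable {αn : ℕ → ℝ → ℝ} {βn : ℕ → ℝ → X}

lemma exists_isCompact_mapsTo (hd : IsMetricFamily I d) (hγn : ∀ n, CurveIn I d (αn n) (βn n) a b)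
    (hγ : CurveIn I d α β a b)
    (hlim : ∀ t ∈ Icc a b, Tendsto (fun p : ℕ × ℝ => (αn p.1 p.2, βn p.1 p.2))
      (atTop ×ˢ 𝓝[Icc a b] t) (𝓝 (α t, β t))) :
    ∃ (J : Set ℝ) (K : Set X), IsCompact J ∧ IsCompact K ∧ J ⊆ I ∧
      (∀ n, MapsTo (αn n) (Icc a b) J ∧ MapsTo (βn n) (Icc a b) K) ∧
      MapsTo α (Icc a b) J ∧ MapsTo β (Icc a b) K := by
  let γ : ℝ → ℝ × X := fun t => (α t, β t)
  let γn : ℕ → ℝ → ℝ × X := fun n t => (αn n t, βn n t)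
  let C : Set (ℝ × X) := γ '' Icc a b ∪ ⋃ n, γn n '' Icc a b
  have himage : Tendsto (fun n => γn n '' Icc a b) cofinite (𝓝ˢ (γ '' Icc a b)).smallSets := by
    rw [Nat.cofinite_eq_atTop]
    exact tendsto_image_smallSets_nhdsSet isCompact_Icc hlim
  have hC : IsCompact C := isCompact_union_iUnion_of_tendsto_smallSets
    (isCompact_Icc.image_of_continuousOn (hγ.continuousOn_prodMk hd))
    (fun n => isCompact_Icc.image_of_continuousOn ((hγn n).continuousOn_prodMk hd)) himage
  have hmem : ∀ t ∈ Icc a b, γ t ∈ C := fun t ht => mem_union_left _ (mem_image_of_mem γ ht)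
  have hmemn : ∀ n, ∀ t ∈ Icc a b, γn n t ∈ C := fun n t ht =>
    mem_union_right _ (mem_iUnion.2 ⟨n, mem_image_of_mem (γn n) ht⟩)
  refine ⟨_, _, hC.image continuous_fst, hC.image continuous_snd, ?_,
    fun n => ⟨fun t ht => mem_image_of_mem _ (hmemn n t ht),
      fun t ht => mem_image_of_mem _ (hmemn n t ht)⟩,
    fun t ht => mem_image_of_mem _ (hmem t ht), fun t ht => mem_image_of_mem _ (hmem t ht)⟩
  rintro _ ⟨_, ⟨t, ht, rfl⟩ | hz, rfl⟩
  · exact hγ.2.2.2 t ht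
  · obtain ⟨n, t, ht, rfl⟩ := mem_iUnion.1 hz
    exact (hγn n).2.2.2 t ht

end UniformLimits

theorem lorLen_upper_semicontinuous_general {X : Type*} [TopologicalSpace X]
    (I : Set ℝ) (d : ℝ → X → X → ℝ) (hd : IsMetricFamily I d) (hdC : CondC I d)
    (h : ℝ → X → ℝ)
    (hcont : ContinuousOn (fun z : ℝ × X => h z.1 z.2) (I ×ˢ (Set.univ : Set X)))
    (a b : ℝ) (α : ℕ → ℝ → ℝ) (β : ℕ → ℝ → X) (α₀ : ℝ → ℝ) (β₀ : ℝ → X)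
    (hcausal : ∀ j, CausalCurve I d h (α j) (β j) a b) (hγ₀ : CurveIn I d α₀ β₀ a b)
    (hlim : ∀ t ∈ Icc a b, Tendsto (fun p : ℕ × ℝ => (α p.1 p.2, β p.1 p.2))
      (atTop ×ˢ 𝓝[Icc a b] t) (𝓝 (α₀ t, β₀ t))) :
    limsup (fun j => lorLen d h (α j) (β j) a b) atTop ≤ lorLen d h α₀ β₀ a b := by
  obtain ⟨J, K, hJ, hK, hJI, hJK, hJ₀, hK₀⟩ :=
    exists_isCompact_mapsTo hd (fun j => (hcausal j).1) hγ₀ hlim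
  obtain ⟨r, ω, hω⟩ := hdC.exists_isLogModulus hd hJI hJ hK
  refine limsup_le_of_forall_eventually_le_add_mul (C := ∫ t in a..b, |deriv α₀ t|)
    (isBoundedUnder_of ⟨0, fun j => lorLen_nonneg hγ₀.1.le⟩) fun κ hκ ε hε => ?_
  exact eventually_lorLen_le (fun s hs => hd s (hJI hs)) hω
    (hcont.mono (prod_mono_left hJI))
    (fun j => ⟨(hcausal j).1.of_mapsTo hJI (hJK j).1, (hcausal j).2⟩) (fun j => (hJK j).2)
    (hγ₀.of_mapsTo hJI hJ₀) hK₀ hlim hκ hε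

/-- **Upper semicontinuity of the Lorentzian length** (Proposition 4.6): if causal
curves `γ_j` converge uniformly to a causal curve `γ`, then
`limsup τ(γ_j) ≤ τ(γ)`. -/
theorem lorLen_upper_semicontinuous {X : Type*} [TopologicalSpace X]
    [LocallyCompactSpace X]
    (I : Set ℝ) (hIopen : IsOpen I) (hIord : I.OrdConnected) (hIne : I.Nonempty)
    (d : ℝ → X → X → ℝ) (hd : IsMetricFamily I d) (hdC : CondC I d)
    (h : ℝ → X → ℝ) (hpos : ∀ s ∈ I, ∀ x : X, 0 < h s x)
    (hcont : ContinuousOn (fun z : ℝ × X => h z.1 z.2) (I ×ˢ (Set.univ : Set X)))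
    (D : (ℝ × X) → (ℝ × X) → ℝ) (hD : IsCompatibleProdMetric D)
    (a b : ℝ) (hab : a < b)
    (α : ℕ → ℝ → ℝ) (β : ℕ → ℝ → X) (α₀ : ℝ → ℝ) (β₀ : ℝ → X)
    (hcausal : ∀ j, CausalCurve I d h (α j) (β j) a b)
    (hcausal₀ : CausalCurve I d h α₀ β₀ a b)
    (hunif : ∀ ε > (0 : ℝ), ∀ᶠ j in Filter.atTop,
      ∀ t ∈ Set.Icc a b, D (α j t, β j t) (α₀ t, β₀ t) < ε) :
    Filter.limsup (fun j => lorLen d h (α j) (β j) a b) Filter.atTop ≤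
      lorLen d h α₀ β₀ a b :=
  lorLen_upper_semicontinuous_general I d hd hdC h hcont a b α β α₀ β₀ hcausal hcausal₀.1
    fun _ => hD.tendsto_of_uniform (hcausal₀.1.continuousOn_prodMk hd) hunif
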